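/- arXiv:math/0107082 — 3 statements merged into one kernel-verified Lean document; each statement's English description precedes it below -/
import Mathlib

section
/- Define the balanced negapolygamma ψ^{(-k)}(q) = (1/k!)[A_k(q) - H_{k-1} B_k(q)] for k ≥ 1, where A_k(q) = k ζ'(1-k,q), H_r is the r-th harmonic number (H_0 = 0), and B_k is the Bernoulli polynomial. Then d/dq ψ^{(-k)}(q) = ψ^{(-k+1)}(q) for k ≥ 2 and q > 0. -/
open Complex

/-- The `k`-th Bernoulli polynomial, evaluated at a real number. -/
noncomputable def bernoulliPoly (k : ℕ) (x : ℝ) : ℝ :=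
  Polynomial.eval x ((Polynomial.bernoulli k).map (algebraMap ℚ ℝ))

/-- The `r`-th harmonic number, `H_0 = 0`. -/
noncomputable def harmonicNum (r : ℕ) : ℝ := ∑ i ∈ Finset.range r, (1 : ℝ) / (i + 1)

/-- The balanced negapolygamma `ψ^{(-k)}(q) = (1/k!)[A_k(q) - H_{k-1} B_k(q)]`,
where `A_k(q) = k ζ'(1-k,q)` is defined via (any) analytic continuation `F` of the
Hurwitz zeta function in its first variable. -/
noncomputable def balancedNegapolygamma (F : ℂ → ℝ → ℂ) (k : ℕ) (q : ℝ) : ℂ :=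
  (1 / (k.factorial : ℂ)) *
    ((k : ℂ) * deriv (fun z => F z q) (1 - k) -
      (harmonicNum (k - 1) : ℂ) * (bernoulliPoly k q : ℂ))

/-!
For `Re z > 1` the series gives `∂ζ(z, q)/∂q = -z ζ(z + 1, q)`. Integrated from `1` to `q`, this
says that `H(z, q) = (z - 1) ζ(z, q)` satisfies `H(z, q) = H(z, 1) + (1 - z) ∫₁^q H(z + 1, t) dt`.
The right-hand side only involves `H` one unit to the right, and no pole, so by the identity
theorem the equation holds for all `z`, and joint continuity in `(z, q)` spreads to the left one
unit at a time. Hence the derivative formula holds for all `z ≠ 0, 1`, and it may be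
differentiated in `z`: `∂ζ'(z, q)/∂q = -ζ(z + 1, q) - z ζ'(z + 1, q)`. At `z = 1 - k` the
additional term is `-ζ(2 - k, q) = B_{k-1}(q) / (k - 1)`, which is what
`H_{k-1} - H_{k-2} = 1 / (k - 1)` cancels.
-/

open Filter MeasureTheory Metric Set Topology

/-! ### Holomorphic families -/

/-- A family of functions holomorphic on `U`, indexed by `s ∈ S` and jointly continuous in the
variable and the index; the setting for differentiating and integrating with respect to `s`. -/
structure IsHolomorphicFamilyOn {X E : Type*} [TopologicalSpace X] [NormedAddCommGroup E]
    [NormedSpace ℂ E] (f : ℂ → X → E) (U : Set ℂ) (S : Set X) : Prop where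
  continuousOn : ContinuousOn (Function.uncurry f) (U ×ˢ S)
  differentiableOn : ∀ s ∈ S, DifferentiableOn ℂ (f · s) U

namespace IsHolomorphicFamilyOn

section Parameter

variable {X E : Type*} [TopologicalSpace X] [NormedAddCommGroup E] [NormedSpace ℂ E]
  {f : ℂ → X → E} {U : Set ℂ} {S : Set X} {z : ℂ}

theorem mono {T : Set X} {V : Set ℂ} (hf : IsHolomorphicFamilyOn f U S) (hV : V ⊆ U) (hT : T ⊆ S) :
    IsHolomorphicFamilyOn f V T :=
  ⟨hf.continuousOn.mono (prod_mono hV hT), fun s hs => (hf.differentiableOn s (hT hs)).mono hV⟩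

theorem congr {g : ℂ → X → E} (hf : IsHolomorphicFamilyOn f U S)
    (h : ∀ z ∈ U, ∀ s ∈ S, g z s = f z s) : IsHolomorphicFamilyOn g U S :=
  ⟨hf.continuousOn.congr fun p hp => h p.1 hp.1 p.2 hp.2,
    fun s hs => (hf.differentiableOn s hs).congr fun z hz => h z hz s hs⟩

theorem const_add {b : ℂ → E} (hf : IsHolomorphicFamilyOn f U S) (hb : DifferentiableOn ℂ b U) :
    IsHolomorphicFamilyOn (fun z s => b z + f z s) U S :=
  ⟨(hb.continuousOn.comp continuousOn_fst fun _ hp => hp.1).add hf.continuousOn,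
    fun s hs => hb.add (hf.differentiableOn s hs)⟩

theorem smul {c : ℂ → ℂ} (hf : IsHolomorphicFamilyOn f U S) (hc : DifferentiableOn ℂ c U) :
    IsHolomorphicFamilyOn (fun z s => c z • f z s) U S :=
  ⟨(hc.continuousOn.comp continuousOn_fst fun _ hp => hp.1).smul hf.continuousOn,
    fun s hs => hc.smul (hf.differentiableOn s hs)⟩

theorem comp {φ : ℂ → ℂ} {V : Set ℂ} (hf : IsHolomorphicFamilyOn f U S)
    (hφ : DifferentiableOn ℂ φ V) (hVU : MapsTo φ V U) :
    IsHolomorphicFamilyOn (fun z s => f (φ z) s) V S :=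
  ⟨hf.continuousOn.comp (f := Prod.map φ id) (hφ.continuousOn.prodMap continuousOn_id)
      fun _ hp => ⟨hVU hp.1, hp.2⟩,
    fun s hs => (hf.differentiableOn s hs).comp hφ hVU⟩

theorem iUnion {ι : Sort*} {V : ι → Set ℂ} (hV : ∀ i, IsOpen (V i))
    (hf : ∀ i, IsHolomorphicFamilyOn f (V i) S) : IsHolomorphicFamilyOn f (⋃ i, V i) S where
  continuousOn := by
    rintro ⟨z, s⟩ ⟨hz, hs⟩
    obtain ⟨i, hi⟩ := mem_iUnion.1 hz
    refine ((hf i).continuousOn (z, s) ⟨hi, hs⟩).mono_of_mem_nhdsWithin ?_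
    rw [nhdsWithin_prod_eq]
    exact prod_mem_prod (mem_nhdsWithin_of_mem_nhds ((hV i).mem_nhds hi)) self_mem_nhdsWithin
  differentiableOn s hs z hz := by
    obtain ⟨i, hi⟩ := mem_iUnion.1 hz
    exact (((hf i).differentiableOn s hs).differentiableAt
      ((hV i).mem_nhds hi)).differentiableWithinAt

theorem continuousOn_right (hf : IsHolomorphicFamilyOn f U S) (hz : z ∈ U) :
    ContinuousOn (f z) S :=
  hf.continuousOn.comp (f := fun s => (z, s)) (by fun_prop) fun _ hs => ⟨hz, hs⟩

theorem tendstoLocallyUniformlyOn (hf : IsHolomorphicFamilyOn f U S) (hU : IsOpen U) {s₀ : X}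
    (hs₀ : s₀ ∈ S) : TendstoLocallyUniformlyOn (fun s z => f z s) (f · s₀) (𝓝[S] s₀) U := by
  rw [tendstoLocallyUniformlyOn_iff_forall_isCompact hU]
  intro K hKU hK u hu
  have hswap : ContinuousOn (Function.uncurry fun s z => f z s) (S ×ˢ K) :=
    hf.continuousOn.comp continuous_swap.continuousOn fun p hp => ⟨hKU hp.2, hp.1⟩
  obtain ⟨v, hv, hvu⟩ := hK.mem_uniformity_of_prod hswap hs₀ (symm_le_uniformity hu)
  filter_upwards [hv] with s hs z hz using hvu s hs z hz

protected theorem deriv [CompleteSpace E] (hf : IsHolomorphicFamilyOn f U S) (hU : IsOpen U) :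
    IsHolomorphicFamilyOn (fun z s => deriv (f · s) z) U S where
  differentiableOn s hs := (hf.differentiableOn s hs).deriv hU
  continuousOn := by
    rintro ⟨z₀, s₀⟩ ⟨hz₀, hs₀⟩
    have hlim := (hf.tendstoLocallyUniformlyOn hU hs₀).deriv
      (eventually_mem_nhdsWithin.mono hf.differentiableOn) hU
    have hsnd : Tendsto Prod.snd (𝓝[U ×ˢ S] (z₀, s₀)) (𝓝[S] s₀) := by
      rw [nhdsWithin_prod_eq]; exact tendsto_snd
    have hfst : Tendsto Prod.fst (𝓝[U ×ˢ S] (z₀, s₀)) (𝓝[U] z₀) := by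
      rw [nhdsWithin_prod_eq]; exact tendsto_fst
    have hderiv := ((hf.differentiableOn s₀ hs₀).deriv hU).continuousOn
    refine tendsto_comp_of_locally_uniform_limit_within (f := deriv (f · s₀))
      (F := fun p : ℂ × X => deriv (f · p.2)) (g := Prod.fst) (hderiv z₀ hz₀) hfst
      fun u hu => ?_
    obtain ⟨t, ht, hclose⟩ := hlim u hu z₀ hz₀
    exact ⟨t, ht, hsnd.eventually hclose⟩

end Parameter

section Integral

variable {E : Type*} [NormedAddCommGroup E] [NormedSpace ℂ E] {f g : ℂ → ℝ → E} {U : Set ℂ}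
  {I : Set ℝ} {z : ℂ} {a b : ℝ}

theorem intervalIntegrable (hf : IsHolomorphicFamilyOn f U (uIcc a b)) (hz : z ∈ U) :
    IntervalIntegrable (f z) volume a b :=
  (hf.continuousOn_right hz).intervalIntegrable

theorem hasDerivAt_integral [CompleteSpace E] (hf : IsHolomorphicFamilyOn f U (uIcc a b))
    (hU : IsOpen U) (hz : z ∈ U) :
    HasDerivAt (fun w => ∫ s in a..b, f w s) (∫ s in a..b, deriv (f · s) z) z := by
  obtain ⟨r, hr, hrU⟩ := nhds_basis_closedBall.mem_iff.1 (hU.mem_nhds hz)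
  have hball : ball z r ⊆ U := ball_subset_closedBall.trans hrU
  obtain ⟨M, hM⟩ := ((isCompact_closedBall z r).prod isCompact_uIcc).exists_bound_of_continuousOn
    ((hf.deriv hU).continuousOn.mono (prod_mono hrU subset_rfl))
  refine (intervalIntegral.hasDerivAt_integral_of_dominated_loc_of_deriv_le
    (F' := fun w s => deriv (f · s) w) (bound := fun _ => M)
    (ball_mem_nhds z hr) ?_ (hf.intervalIntegrable hz)
    ((hf.deriv hU).intervalIntegrable hz).def'.aestronglyMeasurable ?_
    intervalIntegrable_const ?_).2
  · filter_upwards [hU.mem_nhds hz] with w hw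
    exact (hf.intervalIntegrable hw).def'.aestronglyMeasurable
  · exact .of_forall fun s hs w hw => hM (w, s) ⟨ball_subset_closedBall hw, uIoc_subset_uIcc hs⟩
  · exact .of_forall fun s hs w hw =>
      ((hf.differentiableOn s (uIoc_subset_uIcc hs)).differentiableAt
        (hU.mem_nhds (hball hw))).hasDerivAt

theorem primitive [CompleteSpace E] (hf : IsHolomorphicFamilyOn f U I) (hU : IsOpen U)
    (hI : I.OrdConnected) (ha : a ∈ I) :
    IsHolomorphicFamilyOn (fun z u => ∫ s in a..u, f z s) U I where
  differentiableOn u hu z hz := ((hf.mono subset_rfl (hI.uIcc_subset ha hu)).hasDerivAt_integral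
    hU hz).differentiableAt.differentiableWithinAt
  continuousOn := by
    -- Clamping the rescaled variable to `[0, 1]` keeps the integrand globally continuous in it.
    let c (u s : ℝ) : ℝ := a + (u - a) * projIcc 0 1 zero_le_one s
    have hc {u : ℝ} (hu : u ∈ I) (s : ℝ) : c u s ∈ I := by
      have h := (convex_iff_ordConnected.2 hI).add_smul_sub_mem ha hu (projIcc 0 1 zero_le_one s).2
      simpa only [smul_eq_mul, mul_comm] using h
    have hcont : Continuous (Function.uncurry fun (p : U ×ˢ I) s => f p.1.1 (c p.1.2 s)) :=
      hf.continuousOn.comp_continuous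
        (f := fun q : (U ×ˢ I : Set (ℂ × ℝ)) × ℝ => (q.1.1.1, c q.1.1.2 q.2)) (by fun_prop)
        fun q => ⟨q.1.2.1, hc q.1.2.2 q.2⟩
    have hrescale (z : ℂ) (u : ℝ) :
        ∫ s in a..u, f z s = (u - a) • ∫ s in 0..1, f z (c u s) := by
      have hproj : EqOn (fun s => f z (c u s)) (fun s => f z (a + (u - a) * s)) (uIcc 0 1) := by
        intro s hs
        rw [uIcc_of_le zero_le_one] at hs
        simp only [c, projIcc_of_mem zero_le_one hs]
      rw [intervalIntegral.integral_congr hproj, intervalIntegral.smul_integral_comp_add_mul]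
      ring_nf
    rw [continuousOn_iff_continuous_domRestrict]
    simp only [Function.uncurry_def, domRestrict_def, hrescale]
    exact (by fun_prop : Continuous fun p : U ×ˢ I => p.1.2 - a).smul
      (intervalIntegral.continuous_parametric_intervalIntegral_of_continuous' hcont 0 1)

theorem hasDerivAt_deriv_of_hasDerivAt [CompleteSpace E]
    (hg : IsHolomorphicFamilyOn g U I) (hU : IsOpen U)
    (hI : IsOpen I) (hI' : I.OrdConnected) {u : ℝ} (hu : u ∈ I) (hf : DifferentiableOn ℂ (f · u) U)
    (hfg : ∀ z ∈ U, ∀ t ∈ I, HasDerivAt (f z) (g z t) t) (hz : z ∈ U) :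
    HasDerivAt (fun t => deriv (f · t) z) (deriv (g · u) z) u := by
  have hseg {t : ℝ} (ht : t ∈ I) : IsHolomorphicFamilyOn g U (uIcc u t) :=
    hg.mono subset_rfl (hI'.uIcc_subset hu ht)
  have hftc {w : ℂ} (hw : w ∈ U) {t : ℝ} (ht : t ∈ I) : f w t = f w u + ∫ s in u..t, g w s := by
    rw [intervalIntegral.integral_eq_sub_of_hasDerivAt
      (fun s hs => hfg w hw s (hI'.uIcc_subset hu ht hs)) ((hseg ht).intervalIntegrable hw)]
    abel
  have hderiv : ∀ t ∈ I, deriv (f · t) z =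
      deriv (f · u) z + ∫ s in u..t, deriv (g · s) z := fun t ht =>
    ((((hf.differentiableAt (hU.mem_nhds hz)).hasDerivAt.add
      ((hseg ht).hasDerivAt_integral hU hz))).congr_of_eventuallyEq
      (eventuallyEq_of_mem (hU.mem_nhds hz) fun w hw => hftc hw ht)).deriv
  have hcont := (hg.deriv hU).continuousOn_right hz
  have hint := intervalIntegral.integral_hasDerivAt_right (a := u) (b := u)
    IntervalIntegrable.refl (hcont.stronglyMeasurableAtFilter hI u hu)
    (hcont.continuousAt (hI.mem_nhds hu))
  exact (hint.const_add _).congr_of_eventuallyEq (eventuallyEq_of_mem (hI.mem_nhds hu) hderiv)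

end Integral

end IsHolomorphicFamilyOn

/-! ### The Hurwitz series -/

/-- The Dirichlet series of the Hurwitz zeta function `ζ(z, q)`, convergent for `Re z > 1`; it has
the junk value `0` where it diverges. -/
noncomputable def hurwitzSeries (z : ℂ) (q : ℝ) : ℂ := ∑' n : ℕ, 1 / ((n : ℂ) + (q : ℂ)) ^ z

section HurwitzSeries

variable {z : ℂ} {q : ℝ}

theorem norm_one_div_natCast_add_cpow (n : ℕ) (hq : 0 < q) (z : ℂ) :
    ‖1 / ((n : ℂ) + (q : ℂ)) ^ z‖ = 1 / |(n : ℝ) + q| ^ z.re := by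
  have hpos : 0 < (n : ℝ) + q := by positivity
  rw [norm_div, norm_one, abs_of_pos hpos, ← norm_cpow_eq_rpow_re_of_pos hpos]
  push_cast; rfl

theorem summable_one_div_natCast_add_cpow (hz : 1 < z.re) (hq : 0 < q) :
    Summable fun n : ℕ => 1 / ((n : ℂ) + (q : ℂ)) ^ z := by
  refine .of_norm ?_
  simpa only [norm_one_div_natCast_add_cpow _ hq] using
    (Real.summable_one_div_nat_add_rpow q z.re).2 hz

theorem hasDerivAt_one_div_natCast_add_cpow (n : ℕ) (hq : 0 < q) (z : ℂ) :
    HasDerivAt (fun t : ℝ => 1 / ((n : ℂ) + (t : ℂ)) ^ z)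
      (-z * (1 / ((n : ℂ) + (q : ℂ)) ^ (z + 1))) q := by
  have hslit : (n : ℂ) + (q : ℂ) ∈ slitPlane := by
    left; simpa using (by positivity : 0 < (n : ℝ) + q)
  have h := (((hasDerivAt_id (q : ℂ)).const_add (n : ℂ)).cpow_const (c := -z) hslit).comp_ofReal
  simpa only [one_div, ← cpow_neg, neg_add', mul_one, id_eq] using h

/-- Keeping both powers of `x` spares a case distinction between `x < 1` and `1 ≤ x` when a series
is dominated locally uniformly in the exponent. -/
theorem one_div_rpow_le_add {x y a b s : ℝ} (hx : 0 < x) (hxy : x ≤ y) (has : a ≤ s) (hsb : s ≤ b)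
    (hs : 0 ≤ s) : 1 / y ^ s ≤ 1 / x ^ a + 1 / x ^ b := by
  have hy : 1 / y ^ s ≤ 1 / x ^ s := by gcongr
  have ha : 0 ≤ 1 / x ^ a := by positivity
  have hb : 0 ≤ 1 / x ^ b := by positivity
  rcases le_total 1 x with hx1 | hx1
  · have hle : 1 / x ^ s ≤ 1 / x ^ a :=
      one_div_le_one_div_of_le (by positivity) (Real.rpow_le_rpow_of_exponent_le hx1 has)
    exact hy.trans (hle.trans (le_add_of_nonneg_right hb))
  · have hle : 1 / x ^ s ≤ 1 / x ^ b :=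
      one_div_le_one_div_of_le (by positivity) (Real.rpow_le_rpow_of_exponent_ge hx hx1 hsb)
    exact hy.trans (hle.trans (le_add_of_nonneg_left ha))

theorem continuousAt_one_div_natCast_add_cpow (n : ℕ) (hq : 0 < q) (z : ℂ) :
    ContinuousAt (fun p : ℂ × ℝ => 1 / ((n : ℂ) + (p.2 : ℂ)) ^ p.1) (z, q) := by
  have hslit : (n : ℂ) + (q : ℂ) ∈ slitPlane := by
    left; simpa using (by positivity : 0 < (n : ℝ) + q)
  simp only [one_div, ← cpow_neg]
  exact ContinuousAt.cpow (by fun_prop) (by fun_prop) hslit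

theorem continuousOn_hurwitzSeries :
    ContinuousOn (Function.uncurry hurwitzSeries) ({z | 1 < z.re} ×ˢ Ioi 0) := by
  rintro ⟨z₀, q₀⟩ ⟨hz₀ : 1 < z₀.re, hq₀ : 0 < q₀⟩
  obtain ⟨a, ha, haz⟩ := exists_between hz₀
  obtain ⟨b, hzb⟩ := exists_gt z₀.re
  obtain ⟨r, hr, hrq⟩ := exists_between hq₀
  have hcont : ContinuousOn (Function.uncurry hurwitzSeries) ((re ⁻¹' Ioo a b) ×ˢ Ioi r) := by
    refine continuousOn_tsum (u := fun n : ℕ => 1 / |(n : ℝ) + r| ^ a + 1 / |(n : ℝ) + r| ^ b)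
      (fun n => ?_) (((Real.summable_one_div_nat_add_rpow r a).2 ha).add
        ((Real.summable_one_div_nat_add_rpow r b).2 (hz₀.trans hzb))) ?_
    · rintro ⟨z, q⟩ ⟨-, hq⟩
      exact (continuousAt_one_div_natCast_add_cpow n (hr.trans hq) z).continuousWithinAt
    · rintro n ⟨z, q⟩ ⟨⟨haz, hzb⟩, hq : r < q⟩
      have hnq : 0 < (n : ℝ) + q := add_pos_of_nonneg_of_pos n.cast_nonneg (hr.trans hq)
      have hnr : 0 < (n : ℝ) + r := by positivity
      rw [norm_one_div_natCast_add_cpow n (hr.trans hq), abs_of_pos hnq, abs_of_pos hnr]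
      exact one_div_rpow_le_add hnr (by gcongr) haz.le hzb.le (by dsimp only at haz; linarith)
  have hmem : (re ⁻¹' Ioo a b) ×ˢ Ioi r ∈ 𝓝 (z₀, q₀) := prod_mem_nhds
    ((isOpen_Ioo.preimage continuous_re).mem_nhds ⟨haz, hzb⟩) (Ioi_mem_nhds hrq)
  exact (hcont.continuousAt hmem).continuousWithinAt

theorem hasDerivAt_hurwitzSeries (hz : 1 < z.re) (hq : 0 < q) :
    HasDerivAt (hurwitzSeries z) (-z * hurwitzSeries (z + 1) q) q := by
  obtain ⟨r, hr, hrq⟩ := exists_between hq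
  have hz' : 1 < (z + 1).re := by simp only [add_re, one_re]; linarith
  rw [hurwitzSeries, ← tsum_mul_left]
  refine hasDerivAt_tsum_of_isPreconnected
    (((Real.summable_one_div_nat_add_rpow r (z + 1).re).2 hz').mul_left ‖z‖) isOpen_Ioi
    isPreconnected_Ioi (fun n t ht => hasDerivAt_one_div_natCast_add_cpow n (hr.trans ht) z)
    (fun n t ht => ?_) hrq (summable_one_div_natCast_add_cpow hz hq) hrq
  rw [norm_mul, norm_neg, norm_one_div_natCast_add_cpow n (hr.trans ht)]
  have : r < t := ht
  have : 0 < (n : ℝ) + r := by positivity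
  gcongr

end HurwitzSeries

/-! ### Analytic continuation -/

theorem isPreconnected_setOf_lt_re_sdiff {C : Set ℂ} (hC : C.Countable) (a : ℝ) :
    IsPreconnected ({z : ℂ | a < z.re} \ C) := by
  -- `e` maps `ℂ` bijectively onto the half-plane, and `ℂ` minus a countable set is connected.
  let e (z : ℂ) : ℂ := ⟨a + Real.exp z.re, z.im⟩
  have he : Function.Injective e := fun z w h => by
    rw [Complex.mk.injEq, add_right_inj, Real.exp_eq_exp] at h
    exact Complex.ext h.1 h.2
  have hcont : Continuous e := by
    simp only [e, mk_eq_add_mul_I]; fun_prop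
  have himage : e '' (e ⁻¹' C)ᶜ = {z : ℂ | a < z.re} \ C := by
    ext z
    constructor
    · rintro ⟨w, hw, rfl⟩
      exact ⟨by simp [e, Real.exp_pos], hw⟩
    · rintro ⟨hz : a < z.re, hzC⟩
      have hez : e ⟨Real.log (z.re - a), z.im⟩ = z := by
        simp [e, Real.exp_log (sub_pos.2 hz)]
      exact ⟨_, by rwa [mem_compl_iff, mem_preimage, hez], hez⟩
  rw [← himage]
  exact ((hC.preimage_of_injOn he.injOn).isConnected_compl_of_one_lt_rank
    (by simp)).isPreconnected.image e hcont.continuousOn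

theorem hasDerivAt_bernoulliPoly_succ (k : ℕ) (x : ℝ) :
    HasDerivAt (bernoulliPoly (k + 1)) ((k + 1) * bernoulliPoly k x) x :=
  mod_cast hasDerivAt_bernoulliFun (k + 1) x

theorem bernoulliPoly_one (k : ℕ) : bernoulliPoly k 1 = bernoulli' k := by
  rw [bernoulliPoly, Polynomial.eval_one_map, Polynomial.bernoulli_eval_one, eq_ratCast]

/-- `F` is the analytic continuation of the Hurwitz zeta function in its first variable to
`ℂ ∖ {1}`, for each `q > 0`. Regularity in `q` is not assumed. -/
structure IsHurwitzContinuation (F : ℂ → ℝ → ℂ) : Prop where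
  differentiableOn : ∀ q : ℝ, 0 < q → DifferentiableOn ℂ (F · q) {1}ᶜ
  eq_hurwitzSeries : ∀ z : ℂ, 1 < z.re → ∀ q : ℝ, 0 < q → F z q = hurwitzSeries z q

/-- The entire function `(z - 1) ζ(z, q)`, analogous to `riemannZeta₁`. The value `1` at `z = 1`
encodes that the residue of `ζ(z, q)` is `1`, whatever `F 1 q` is. -/
noncomputable def hurwitzReg (F : ℂ → ℝ → ℂ) (z : ℂ) (q : ℝ) : ℂ :=
  Function.update (fun w => (w - 1) * F w q) 1 1 z

section Regularization

variable {F : ℂ → ℝ → ℂ} {z : ℂ} {q : ℝ}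

theorem hurwitzReg_one (F : ℂ → ℝ → ℂ) (q : ℝ) : hurwitzReg F 1 q = 1 :=
  Function.update_self ..

theorem hurwitzReg_of_ne_one (F : ℂ → ℝ → ℂ) (hz : z ≠ 1) (q : ℝ) :
    hurwitzReg F z q = (z - 1) * F z q :=
  Function.update_of_ne hz ..

theorem eq_inv_mul_hurwitzReg (F : ℂ → ℝ → ℂ) (hz : z ≠ 1) (q : ℝ) :
    F z q = (z - 1)⁻¹ * hurwitzReg F z q := by
  rw [hurwitzReg_of_ne_one F hz, inv_mul_cancel_left₀ (sub_ne_zero.2 hz)]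

end Regularization

/-- The operator with fixed point `(z - 1) ζ(z, q)` obtained by integrating
`∂ζ(z, q)/∂q = -z ζ(z + 1, q)` from `1` to `q`. It uses the values of `H` one unit to the right. -/
noncomputable def hurwitzStep (H : ℂ → ℝ → ℂ) (z : ℂ) (q : ℝ) : ℂ :=
  riemannZeta₁ z + (1 - z) * ∫ t in 1..q, H (z + 1) t

theorem IsHolomorphicFamilyOn.hurwitzStep {H : ℂ → ℝ → ℂ} {a : ℝ}
    (hH : IsHolomorphicFamilyOn H {z | a < z.re} (Ioi 0)) :
    IsHolomorphicFamilyOn (hurwitzStep H) {z | a - 1 < z.re} (Ioi 0) := by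
  have hshift := hH.comp (φ := (· + 1)) (V := {z | a - 1 < z.re}) (by fun_prop) fun z hz => by
    simpa only [mem_ofPred_eq, add_re, one_re, sub_lt_iff_lt_add] using hz
  exact ((hshift.primitive (isOpen_lt continuous_const continuous_re) ordConnected_Ioi
    (mem_Ioi.2 one_pos)).smul (c := fun z => 1 - z) (by fun_prop)).const_add
      differentiable_riemannZeta₁.differentiableOn

theorem ne_one_of_one_lt_re {z : ℂ} (hz : 1 < z.re) : z ≠ 1 :=
  ne_of_apply_ne re hz.ne'

namespace IsHurwitzContinuation

variable {F : ℂ → ℝ → ℂ} {z : ℂ} {q : ℝ}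

theorem eq_riemannZeta (hF : IsHurwitzContinuation F) (hz : z ≠ 1) : F z 1 = riemannZeta z := by
  have hζ : DifferentiableOn ℂ riemannZeta {1}ᶜ := fun w hw =>
    (differentiableAt_riemannZeta hw).differentiableWithinAt
  have heq : (F · 1) =ᶠ[𝓝 2] riemannZeta := by
    filter_upwards [continuous_re.continuousAt.eventually_const_lt
      (by norm_num : (1 : ℝ) < (2 : ℂ).re)] with w hw
    simp only [hF.eq_hurwitzSeries w hw 1 one_pos, zeta_eq_tsum_one_div_nat_add_one_cpow hw,
      hurwitzSeries, ofReal_one]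
  exact ((hF.differentiableOn 1 one_pos).analyticOnNhd isOpen_compl_singleton)
    |>.eqOn_of_preconnected_of_eventuallyEq (hζ.analyticOnNhd isOpen_compl_singleton)
    (isConnected_compl_singleton_of_one_lt_rank (by simp) 1).isPreconnected
    (by norm_num : (2 : ℂ) ≠ 1) heq hz

theorem hurwitzReg_one_right (hF : IsHurwitzContinuation F) (z : ℂ) :
    hurwitzReg F z 1 = riemannZeta₁ z := by
  rcases eq_or_ne z 1 with rfl | hz
  · rw [hurwitzReg_one, riemannZeta₁_one]
  · rw [hurwitzReg_of_ne_one F hz, hF.eq_riemannZeta hz, riemannZeta_eq_inv_sub_mul hz,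
      mul_inv_cancel_left₀ (sub_ne_zero.2 hz)]

theorem isHolomorphicFamilyOn_hurwitzReg_of_one_lt_re (hF : IsHurwitzContinuation F) :
    IsHolomorphicFamilyOn (hurwitzReg F) {z | 1 < z.re} (Ioi 0) := by
  have hseries : IsHolomorphicFamilyOn F {z | 1 < z.re} (Ioi 0) :=
    ⟨continuousOn_hurwitzSeries.congr fun p hp => hF.eq_hurwitzSeries p.1 hp.1 p.2 hp.2,
      fun q hq => (hF.differentiableOn q hq).mono fun z hz => ne_one_of_one_lt_re hz⟩
  exact (hseries.smul (c := fun z => z - 1) (by fun_prop)).congr fun z hz q _ =>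
    hurwitzReg_of_ne_one F (ne_one_of_one_lt_re hz) q

theorem hasDerivAt_hurwitzReg_of_one_lt_re (hF : IsHurwitzContinuation F) (hz : 1 < z.re)
    (hq : 0 < q) :
    HasDerivAt (hurwitzReg F z) ((1 - z) * hurwitzReg F (z + 1) q) q := by
  have hz' : 1 < (z + 1).re := by simp only [add_re, one_re]; linarith
  have hval : (1 - z) * hurwitzReg F (z + 1) q = (z - 1) * (-z * hurwitzSeries (z + 1) q) := by
    rw [hurwitzReg_of_ne_one F (ne_one_of_one_lt_re hz'), hF.eq_hurwitzSeries _ hz' q hq]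
    ring
  rw [hval]
  refine ((hasDerivAt_hurwitzSeries hz hq).const_mul (z - 1)).congr_of_eventuallyEq ?_
  filter_upwards [Ioi_mem_nhds hq] with t ht
  rw [hurwitzReg_of_ne_one F (ne_one_of_one_lt_re hz), hF.eq_hurwitzSeries z hz t ht]

theorem hurwitzReg_eq_hurwitzStep_of_one_lt_re (hF : IsHurwitzContinuation F)
    (hz : 1 < z.re) (hq : 0 < q) : hurwitzReg F z q = hurwitzStep (hurwitzReg F) z q := by
  have hz' : 1 < (z + 1).re := by simp only [add_re, one_re]; linarith
  have hsub : uIcc 1 q ⊆ Ioi 0 := ordConnected_Ioi.uIcc_subset one_pos hq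
  have hint : IntervalIntegrable (hurwitzReg F (z + 1)) volume 1 q :=
    (hF.isHolomorphicFamilyOn_hurwitzReg_of_one_lt_re.mono subset_rfl hsub).intervalIntegrable hz'
  rw [hurwitzStep, ← intervalIntegral.integral_const_mul,
    intervalIntegral.integral_eq_sub_of_hasDerivAt
      (fun t ht => hF.hasDerivAt_hurwitzReg_of_one_lt_re hz (hsub ht)) (hint.const_mul _),
    hF.hurwitzReg_one_right, add_sub_cancel]

theorem differentiableOn_hurwitzReg (hF : IsHurwitzContinuation F) (hq : 0 < q) :
    DifferentiableOn ℂ (hurwitzReg F · q) {1}ᶜ :=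
  ((by fun_prop : DifferentiableOn ℂ (fun z : ℂ => z - 1) {1}ᶜ).mul
    (hF.differentiableOn q hq)).congr fun _ hz => hurwitzReg_of_ne_one F hz q

theorem hurwitzReg_eq_hurwitzStep_of_isHolomorphicFamilyOn (hF : IsHurwitzContinuation F)
    {a : ℝ} (ha : a ≤ 1) (hH : IsHolomorphicFamilyOn (hurwitzReg F) {z | a < z.re} (Ioi 0))
    (hz : a - 1 < z.re) (hq : 0 < q) : hurwitzReg F z q = hurwitzStep (hurwitzReg F) z q := by
  rcases eq_or_ne z 1 with rfl | hz1
  · simp only [hurwitzStep, hurwitzReg_one, riemannZeta₁_one, sub_self, zero_mul, add_zero]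
  have hopen : IsOpen ({w : ℂ | a - 1 < w.re} \ {1}) :=
    (isOpen_lt continuous_const continuous_re).sdiff isClosed_singleton
  have heq : (hurwitzReg F · q) =ᶠ[𝓝 2] (hurwitzStep (hurwitzReg F) · q) := by
    filter_upwards [continuous_re.continuousAt.eventually_const_lt
      (by norm_num : (1 : ℝ) < (2 : ℂ).re)] with w hw
    exact hF.hurwitzReg_eq_hurwitzStep_of_one_lt_re hw hq
  have hH' := hH.hurwitzStep.differentiableOn q hq
  refine (((hF.differentiableOn_hurwitzReg hq).mono fun w hw => hw.2).analyticOnNhd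
    hopen).eqOn_of_preconnected_of_eventuallyEq ((hH'.mono sdiff_subset).analyticOnNhd hopen)
    (isPreconnected_setOf_lt_re_sdiff (countable_singleton 1) (a - 1)) ⟨?_, by norm_num⟩ heq
    ⟨hz, hz1⟩
  simp only [mem_ofPred_eq, re_ofNat]
  linarith

theorem isHolomorphicFamilyOn_hurwitzReg_of_nat (hF : IsHurwitzContinuation F) (n : ℕ) :
    IsHolomorphicFamilyOn (hurwitzReg F) {z | 1 - (n : ℝ) < z.re} (Ioi 0) := by
  induction n with
  | zero => simpa using hF.isHolomorphicFamilyOn_hurwitzReg_of_one_lt_re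
  | succ n ih =>
    rw [Nat.cast_succ, ← sub_sub]
    exact ih.hurwitzStep.congr fun z hz q hq =>
      hF.hurwitzReg_eq_hurwitzStep_of_isHolomorphicFamilyOn (by simp) ih hz hq

theorem isHolomorphicFamilyOn_hurwitzReg (hF : IsHurwitzContinuation F) :
    IsHolomorphicFamilyOn (hurwitzReg F) univ (Ioi 0) := by
  refine (IsHolomorphicFamilyOn.iUnion (fun n => isOpen_lt continuous_const continuous_re)
    hF.isHolomorphicFamilyOn_hurwitzReg_of_nat).mono (fun z _ => ?_) subset_rfl
  obtain ⟨n, hn⟩ := exists_nat_gt (1 - z.re)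
  exact mem_iUnion.2 ⟨n, sub_lt_comm.1 hn⟩

theorem hurwitzReg_eq_hurwitzStep (hF : IsHurwitzContinuation F) (z : ℂ) (hq : 0 < q) :
    hurwitzReg F z q = hurwitzStep (hurwitzReg F) z q :=
  hF.hurwitzReg_eq_hurwitzStep_of_isHolomorphicFamilyOn (min_le_left 1 z.re)
    (hF.isHolomorphicFamilyOn_hurwitzReg.mono (subset_univ _) subset_rfl)
    (by linarith [min_le_right 1 z.re]) hq

theorem hasDerivAt_hurwitzReg (hF : IsHurwitzContinuation F) (z : ℂ) (hq : 0 < q) :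
    HasDerivAt (hurwitzReg F z) ((1 - z) * hurwitzReg F (z + 1) q) q := by
  have hcont := hF.isHolomorphicFamilyOn_hurwitzReg.continuousOn_right (mem_univ (z + 1))
  have hint := intervalIntegral.integral_hasDerivAt_right
    (hcont.mono (ordConnected_Ioi.uIcc_subset (mem_Ioi.2 one_pos) hq)).intervalIntegrable
    (hcont.stronglyMeasurableAtFilter isOpen_Ioi q hq) (hcont.continuousAt (Ioi_mem_nhds hq))
  refine ((hint.const_mul (1 - z)).const_add (riemannZeta₁ z)).congr_of_eventuallyEq ?_
  filter_upwards [Ioi_mem_nhds hq] with t ht using hF.hurwitzReg_eq_hurwitzStep z ht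

theorem isHolomorphicFamilyOn (hF : IsHurwitzContinuation F) :
    IsHolomorphicFamilyOn F {1}ᶜ (Ioi 0) :=
  ((hF.isHolomorphicFamilyOn_hurwitzReg.mono (subset_univ _) subset_rfl).smul
    (c := fun z => (z - 1)⁻¹) (DifferentiableOn.inv (by fun_prop) fun _ hz =>
      sub_ne_zero.2 hz)).congr fun _ hz q _ => eq_inv_mul_hurwitzReg F hz q

theorem hasDerivAt (hF : IsHurwitzContinuation F) (hz₀ : z ≠ 0) (hz₁ : z ≠ 1) (hq : 0 < q) :
    HasDerivAt (F z) (-z * F (z + 1) q) q := by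
  rw [funext (eq_inv_mul_hurwitzReg F hz₁)]
  refine ((hF.hasDerivAt_hurwitzReg z hq).const_mul (z - 1)⁻¹).congr_deriv ?_
  rw [hurwitzReg_of_ne_one F (by simpa using hz₀)]
  field_simp [sub_ne_zero.2 hz₁]
  ring

theorem hasDerivAt_deriv (hF : IsHurwitzContinuation F) (hz₀ : z ≠ 0) (hz₁ : z ≠ 1) (hq : 0 < q) :
    HasDerivAt (fun t => deriv (F · t) z) (-F (z + 1) q - z * deriv (F · q) (z + 1)) q := by
  have hU : IsOpen ({0, 1}ᶜ : Set ℂ) := (toFinite _).isClosed.isOpen_compl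
  have hshift : MapsTo (· + 1) ({0, 1}ᶜ : Set ℂ) {1}ᶜ := fun w hw => by
    simp only [mem_compl_iff, mem_insert_iff, mem_singleton_iff, not_or] at hw ⊢
    simpa using hw.1
  have hg : IsHolomorphicFamilyOn (fun w t => -w * F (w + 1) t) {0, 1}ᶜ (Ioi 0) :=
    (hF.isHolomorphicFamilyOn.comp (by fun_prop) hshift).smul (c := fun w => -w) (by fun_prop)
  have hmixed := hg.hasDerivAt_deriv_of_hasDerivAt hU isOpen_Ioi ordConnected_Ioi hq
    ((hF.differentiableOn q hq).mono (compl_subset_compl.2 (by simp)))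
    (fun w hw t ht => hF.hasDerivAt (fun h => hw (.inl h)) (fun h => hw (.inr h)) ht)
    (by simp [hz₀, hz₁] : z ∈ ({0, 1}ᶜ : Set ℂ))
  have hF' : HasDerivAt (F · q) (deriv (F · q) (z + 1)) (z + 1) :=
    ((hF.differentiableOn q hq).differentiableAt
      (isOpen_compl_singleton.mem_nhds (by simpa using hz₀))).hasDerivAt
  refine hmixed.congr_deriv (((hasDerivAt_neg z).mul (hF'.comp_add_const z 1)).deriv.trans ?_)
  ring

theorem hurwitzReg_one_sub_natCast (hF : IsHurwitzContinuation F) (n : ℕ) (hq : 0 < q) :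
    hurwitzReg F (1 - n) q = bernoulliPoly n q := by
  induction n generalizing q with
  | zero => simp [hurwitzReg_one, bernoulliPoly]
  | succ n ih =>
    have hz : (1 - (n + 1 : ℕ) : ℂ) = -n := by push_cast; ring
    have hne : (-n : ℂ) ≠ 1 := fun h => n.cast_add_one_ne_zero (R := ℂ) (by linear_combination -h)
    have hH {t : ℝ} (ht : 0 < t) := hF.hasDerivAt_hurwitzReg (-n) ht
    have hB (t : ℝ) := (hasDerivAt_bernoulliPoly_succ n t).ofReal_comp
    rw [hz]
    refine isOpen_Ioi.eqOn_of_deriv_eq isPreconnected_Ioi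
      (fun t ht => (hH ht).differentiableAt.differentiableWithinAt)
      (fun t _ => (hB t).differentiableAt.differentiableWithinAt) (fun t ht => ?_)
      (mem_Ioi.2 one_pos) ?_ hq
    · rw [(hH ht).deriv, (hB t).deriv, neg_add_eq_sub, ih ht]
      push_cast
      ring
    · rw [hurwitzReg_of_ne_one F hne, hF.eq_riemannZeta hne,
        riemannZeta_neg_nat_eq_bernoulli', bernoulliPoly_one]
      push_cast
      field_simp [n.cast_add_one_ne_zero (R := ℂ)]
      ring

theorem neg_natCast (hF : IsHurwitzContinuation F) (n : ℕ) (hq : 0 < q) :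
    F (-n) q = -bernoulliPoly (n + 1) q / (n + 1) := by
  have hn : (n + 1 : ℂ) ≠ 0 := n.cast_add_one_ne_zero
  have hne : (-n : ℂ) ≠ 1 := fun h => hn (by linear_combination -h)
  have hval := hF.hurwitzReg_one_sub_natCast (n + 1) hq
  rw [Nat.cast_succ, sub_add_cancel_right, hurwitzReg_of_ne_one F hne] at hval
  rw [eq_div_iff hn]
  linear_combination -hval

theorem hasDerivAt_deriv_neg_natCast_succ (hF : IsHurwitzContinuation F) (n : ℕ) (hq : 0 < q) :
    HasDerivAt (fun t => deriv (F · t) (-(n + 1)))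
      ((n + 1) * deriv (F · q) (-n) + bernoulliPoly (n + 1) q / (n + 1)) q := by
  have hn : (n + 1 : ℂ) ≠ 0 := n.cast_add_one_ne_zero
  have hn' : (n + 2 : ℂ) ≠ 0 := mod_cast (n + 1).succ_ne_zero
  refine (hF.hasDerivAt_deriv (neg_ne_zero.2 hn) (fun h => hn' (by linear_combination -h))
    hq).congr_deriv ?_
  rw [neg_add_rev, neg_add_cancel_comm, hF.neg_natCast n hq]
  ring

end IsHurwitzContinuation

theorem harmonicNum_succ (r : ℕ) : harmonicNum (r + 1) = harmonicNum r + 1 / (r + 1) :=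
  Finset.sum_range_succ ..

theorem balancedNegapolygamma_succ (F : ℂ → ℝ → ℂ) (k : ℕ) (q : ℝ) :
    balancedNegapolygamma F (k + 1) q = 1 / (k + 1).factorial *
      ((k + 1) * deriv (F · q) (-k) - harmonicNum k * bernoulliPoly (k + 1) q) := by
  simp only [balancedNegapolygamma, Nat.cast_succ, sub_add_cancel_right, Nat.add_sub_cancel]

/-- For `k ≥ 2` and `q > 0`, `d/dq ψ^{(-k)}(q) = ψ^{(-k+1)}(q)`. -/
theorem balancedNegapolygamma_deriv (F : ℂ → ℝ → ℂ)
    (hF : ∀ q : ℝ, 0 < q → AnalyticOn ℂ (fun z => F z q) {(1 : ℂ)}ᶜ)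
    (hFeq : ∀ z : ℂ, 1 < z.re → ∀ q : ℝ, 0 < q →
      F z q = ∑' n : ℕ, 1 / ((n : ℂ) + (q : ℂ)) ^ z)
    (k : ℕ) (hk : 2 ≤ k) (q : ℝ) (hq : 0 < q) :
    HasDerivAt (fun t : ℝ => balancedNegapolygamma F k t)
      (balancedNegapolygamma F (k - 1) q) q := by
  have hFc : IsHurwitzContinuation F := ⟨fun q hq => (hF q hq).differentiableOn, hFeq⟩
  obtain ⟨k, rfl⟩ := Nat.exists_eq_add_of_le' hk
  have hA := hFc.hasDerivAt_deriv_neg_natCast_succ k hq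
  have hB := (hasDerivAt_bernoulliPoly_succ (k + 1) q).ofReal_comp
  have hk₂ : (k + 1 + 1 : ℂ) ≠ 0 := mod_cast (k + 1).succ_ne_zero
  simp only [balancedNegapolygamma_succ F (k + 1), Nat.cast_succ]
  refine (((hA.const_mul (k + 1 + 1 : ℂ)).sub (hB.const_mul (harmonicNum (k + 1) : ℂ))).const_mul
    (1 / ((k + 2).factorial : ℂ))).congr_deriv ?_
  rw [Nat.add_succ_sub_one, balancedNegapolygamma_succ, harmonicNum_succ, Nat.factorial_succ]
  push_cast
  field_simp
  ring
end

section
/- For n ∈ ℕ, ∫₀¹ qⁿ ln(sin πq) dq = -ln 2/(n+1) + n! ∑_{k=1}^{⌊n/2⌋} (-1)^k ζ(2k+1) / ((2π)^{2k} (n+1-2k)!). -/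
open Real Complex

/-!
For `|r| < 1`, the real part of the Taylor series of `-log (1 - z)` at `z = r * exp (2πiq)` is the
cosine series `-log ‖1 - r * exp (2πiq)‖ = ∑ r ^ m * cos (2πmq) / m`. Integrating it against `f` and
letting `r → 1⁻`, by dominated convergence on one side and Abel's theorem on the other, gives
`∫₀¹ f(q) log (2 sin πq) dq = -∑ cₘ(f) / m`, where `cₘ(f) = ∫₀¹ f(q) cos (2πmq) dq`.
For `f(q) = qⁿ`, repeated integration by parts writes `cₘ(f)` as a polynomial in `1 / m²`, so the
sum over `m` is a combination of the values `ζ(2k + 1)`.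
-/

open MeasureTheory Filter Topology

section LogNorm

lemma norm_one_sub_exp_two_pi_mul_I (q : ℝ) :
    ‖1 - cexp ((2 * π * q : ℝ) * I)‖ = 2 * |Real.sin (π * q)| := by
  rw [norm_sub_rev, mul_comm _ I, norm_exp_I_mul_ofReal_sub_one, norm_mul, Real.norm_two,
    Real.norm_eq_abs, show 2 * π * q / 2 = π * q by ring]

/-- The term `m = 0` vanishes because `x / 0 = 0`. -/
lemma hasSum_pow_div_mul_cos {r : ℝ} (hr : |r| < 1) (x : ℝ) :
    HasSum (fun m : ℕ => r ^ m / m * Real.cos (m * x)) (-Real.log ‖1 - r * cexp (x * I)‖) := by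
  have hz : ‖(r : ℂ) * cexp (x * I)‖ < 1 := by simpa [norm_exp_ofReal_mul_I] using hr
  have hterm (m : ℕ) :
      ((r * cexp (x * I)) ^ m / m : ℂ).re = r ^ m / m * Real.cos (m * x) := by
    have hpolar : (r * cexp (x * I)) ^ m / (m : ℂ) =
        (r ^ m / m : ℝ) * cexp ((m * x : ℝ) * I) := by
      rw [mul_pow, ← Complex.exp_nat_mul]
      push_cast
      ring_nf
    rw [hpolar, re_ofReal_mul, exp_ofReal_mul_I_re]
  simpa only [hterm, neg_re, log_re] using hasSum_re (hasSum_taylorSeries_neg_log hz)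

lemma norm_one_sub_le_two_mul_norm_one_sub_mul {r : ℝ} (h0 : 0 ≤ r) (h1 : r ≤ 1) {w : ℂ}
    (hw : ‖w‖ ≤ 1) : ‖1 - w‖ ≤ 2 * ‖1 - r * w‖ := by
  have hrw : ‖r * w‖ ≤ r := by
    simpa [abs_of_nonneg h0] using mul_le_mul_of_nonneg_left hw h0
  have hdist : 1 - r ≤ ‖1 - r * w‖ := by
    linarith [norm_sub_norm_le 1 (r * w), norm_one (α := ℂ)]
  calc ‖1 - w‖ = ‖(1 - r * w) - ((1 - r : ℝ) : ℂ) * w‖ := by push_cast; ring_nf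
    _ ≤ ‖1 - r * w‖ + (1 - r) * ‖w‖ := by
      simpa [abs_of_nonneg (sub_nonneg.2 h1), -ofReal_sub] using
        norm_sub_le (1 - r * w) (((1 - r : ℝ) : ℂ) * w)
    _ ≤ 2 * ‖1 - r * w‖ := by nlinarith

lemma abs_log_norm_one_sub_mul_le {r : ℝ} (h0 : 0 ≤ r) (h1 : r ≤ 1) {w : ℂ} (hw : ‖w‖ ≤ 1)
    (hw1 : w ≠ 1) :
    |Real.log ‖1 - r * w‖| ≤ Real.log 2 + |Real.log (‖1 - w‖ / 2)| := by
  have hpos : 0 < ‖1 - w‖ / 2 := half_pos (norm_pos_iff.2 (sub_ne_zero.2 hw1.symm))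
  have hlower : ‖1 - w‖ / 2 ≤ ‖1 - r * w‖ := by
    linarith [norm_one_sub_le_two_mul_norm_one_sub_mul h0 h1 hw]
  have hupper : ‖1 - r * w‖ ≤ 2 := by
    have hrw : ‖r * w‖ ≤ 1 := by
      simpa [abs_of_nonneg h0] using mul_le_one₀ h1 (norm_nonneg w) hw
    linarith [norm_sub_le 1 (r * w), norm_one (α := ℂ)]
  have hlog_lower := Real.log_le_log hpos hlower
  have hlog_upper := Real.log_le_log (hpos.trans_le hlower) hupper
  have hlog_two := Real.log_pos one_lt_two
  rw [abs_le]
  constructor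
  · linarith [neg_abs_le (Real.log (‖1 - w‖ / 2))]
  · linarith [abs_nonneg (Real.log (‖1 - w‖ / 2))]

end LogNorm

section LogSin

lemma ae_sin_pi_mul_ne_zero : ∀ᵐ q : ℝ, Real.sin (π * q) ≠ 0 := by
  filter_upwards [(Set.countable_range ((↑) : ℤ → ℝ)).ae_notMem volume] with q hq hsin
  obtain ⟨k, hk⟩ := Real.sin_eq_zero_iff.1 hsin
  exact hq ⟨k, mul_left_cancel₀ Real.pi_ne_zero (by rw [← hk, mul_comm])⟩

lemma intervalIntegrable_log_sin_pi_mul (a b : ℝ) :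
    IntervalIntegrable (fun q => Real.log (Real.sin (π * q))) volume a b := by
  simpa [Function.comp_def, Real.pi_ne_zero] using
    (intervalIntegrable_log_sin (a := π * a) (b := π * b)).comp_mul_left (c := π)

lemma tendsto_integral_mul_log_norm_one_sub_exp {f : ℝ → ℝ} {a b : ℝ}
    (hf : IntervalIntegrable f volume a b)
    (hfl : IntervalIntegrable (fun q => f q * Real.log (Real.sin (π * q))) volume a b) :
    Tendsto (fun r : ℝ => ∫ q in a..b, f q * Real.log ‖1 - r * cexp ((2 * π * q : ℝ) * I)‖)
      (𝓝[<] 1) (𝓝 (∫ q in a..b, f q * Real.log ‖1 - cexp ((2 * π * q : ℝ) * I)‖)) := by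
  have hne : ∀ᵐ q : ℝ, cexp ((2 * π * q : ℝ) * I) ≠ 1 := by
    filter_upwards [ae_sin_pi_mul_ne_zero] with q hq hexp
    have hnorm := norm_one_sub_exp_two_pi_mul_I q
    rw [hexp, sub_self, norm_zero] at hnorm
    exact hq (abs_eq_zero.1 (by linarith))
  apply intervalIntegral.tendsto_integral_filter_of_dominated_convergence
    (fun q => |f q| * Real.log 2 + |f q * Real.log (Real.sin (π * q))|)
  · refine .of_forall fun r => hf.def'.aestronglyMeasurable.mul ?_
    exact Measurable.aestronglyMeasurable (by fun_prop)
  · filter_upwards [Ioo_mem_nhdsLT zero_lt_one] with r hr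
    filter_upwards [hne] with q hq _
    have hlog := abs_log_norm_one_sub_mul_le hr.1.le hr.2.le (norm_exp_ofReal_mul_I _).le hq
    rw [norm_one_sub_exp_two_pi_mul_I, mul_div_cancel_left₀ _ two_ne_zero, Real.log_abs] at hlog
    rw [norm_mul, Real.norm_eq_abs, Real.norm_eq_abs, abs_mul, ← mul_add]
    gcongr
  · exact (hf.abs.mul_const _).add hfl.abs
  · filter_upwards [hne] with q hq _
    have hq' : ‖1 - ((1 : ℝ) : ℂ) * cexp ((2 * π * q : ℝ) * I)‖ ≠ 0 := by
      simpa [sub_eq_zero] using hq.symm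
    have hcont : ContinuousAt
        (fun r : ℝ => f q * Real.log ‖1 - r * cexp ((2 * π * q : ℝ) * I)‖) 1 := by
      fun_prop (disch := assumption)
    simpa [ContinuousAt] using hcont.tendsto.mono_left nhdsWithin_le_nhds

end LogSin

section CosCoeff

/-- The `m`-th Fourier cosine coefficient of `f` on `[0, 1]`, without the customary factor `2`; it
is paired with the coefficients `1 / m` of `-log (2 sin πq)` to integrate `f(q) log (2 sin πq)`. -/
noncomputable def cosCoeff (f : ℝ → ℝ) (m : ℕ) : ℝ :=
  ∫ q in (0 : ℝ)..1, f q * Real.cos (2 * π * m * q)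

lemma cosCoeff_const_mul (c : ℝ) (f : ℝ → ℝ) (m : ℕ) :
    cosCoeff (fun q => c * f q) m = c * cosCoeff f m := by
  simp only [cosCoeff, mul_assoc c, intervalIntegral.integral_const_mul]

lemma hasSum_cosCoeff_div_mul_pow {f : ℝ → ℝ} (hf : IntervalIntegrable f volume 0 1) {r : ℝ}
    (hr : |r| < 1) :
    HasSum (fun m : ℕ => cosCoeff f m / m * r ^ m)
      (-∫ q in (0 : ℝ)..1, f q * Real.log ‖1 - r * cexp ((2 * π * q : ℝ) * I)‖) := by
  have hintegral (m : ℕ) : cosCoeff f m / m * r ^ m =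
      ∫ q in (0 : ℝ)..1, f q * (r ^ m / m * Real.cos (m * (2 * π * q))) := by
    rw [cosCoeff, div_mul_eq_mul_div, mul_div_assoc, ← intervalIntegral.integral_mul_const]
    congr 1 with q
    ring_nf
  simp only [hintegral, ← intervalIntegral.integral_neg, ← mul_neg]
  apply intervalIntegral.hasSum_integral_of_dominated_convergence (fun m q => |f q| * |r| ^ m)
  · refine fun m => hf.def'.aestronglyMeasurable.mul ?_
    exact Continuous.aestronglyMeasurable (by fun_prop)
  · refine fun m => .of_forall fun q _ => ?_
    have hcoeff : |r ^ m / (m : ℝ)| ≤ |r| ^ m := by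
      rw [abs_div, abs_pow, Nat.abs_cast]
      rcases m.eq_zero_or_pos with rfl | hm
      · simp
      · exact div_le_self (by positivity) (by exact_mod_cast hm)
    rw [norm_mul, norm_mul, Real.norm_eq_abs, Real.norm_eq_abs, Real.norm_eq_abs]
    gcongr
    exact (mul_le_of_le_one_right (abs_nonneg _) (Real.abs_cos_le_one _)).trans hcoeff
  · exact .of_forall fun q _ => (summable_geometric_of_lt_one (abs_nonneg r) hr).mul_left _
  · simpa only [tsum_mul_left] using hf.abs.mul_const _
  · exact .of_forall fun q _ => (hasSum_pow_div_mul_cos hr _).mul_left _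

theorem integral_mul_log_sin_of_tendsto_sum_cosCoeff {f : ℝ → ℝ} {S : ℝ}
    (hf : IntervalIntegrable f volume 0 1)
    (hfl : IntervalIntegrable (fun q => f q * Real.log (Real.sin (π * q))) volume 0 1)
    (hS : Tendsto (fun N => ∑ m ∈ Finset.range N, cosCoeff f m / m) atTop (𝓝 S)) :
    ∫ q in (0 : ℝ)..1, f q * Real.log (Real.sin (π * q)) =
      -(Real.log 2 * ∫ q in (0 : ℝ)..1, f q) - S := by
  have hboundary : ∫ q in (0 : ℝ)..1, f q * Real.log ‖1 - cexp ((2 * π * q : ℝ) * I)‖ = -S := by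
    refine neg_eq_iff_eq_neg.1 (tendsto_nhds_unique ?_ (tendsto_tsum_powerSeries_nhdsWithin_lt hS))
    refine (tendsto_integral_mul_log_norm_one_sub_exp hf hfl).neg.congr' ?_
    filter_upwards [Ioo_mem_nhdsLT zero_lt_one] with r hr
    exact (hasSum_cosCoeff_div_mul_pow hf (abs_lt.2 ⟨by linarith [hr.1], hr.2⟩)).tsum_eq.symm
  have hsplit : ∫ q in (0 : ℝ)..1, f q * Real.log ‖1 - cexp ((2 * π * q : ℝ) * I)‖ =
      ∫ q in (0 : ℝ)..1, (Real.log 2 * f q + f q * Real.log (Real.sin (π * q))) := by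
    apply intervalIntegral.integral_congr_ae
    filter_upwards [ae_sin_pi_mul_ne_zero] with q hq _
    rw [norm_one_sub_exp_two_pi_mul_I, Real.log_mul two_ne_zero (abs_ne_zero.2 hq), Real.log_abs]
    ring
  rw [intervalIntegral.integral_add (hf.const_mul _) hfl, intervalIntegral.integral_const_mul]
    at hsplit
  linarith

lemma integral_mul_cos_mul {f f' f'' : ℝ → ℝ} {a b ω : ℝ} (hω : ω ≠ 0)
    (hf : ∀ q ∈ Set.uIcc a b, HasDerivAt f (f' q) q)
    (hf' : ∀ q ∈ Set.uIcc a b, HasDerivAt f' (f'' q) q)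
    (hf'' : IntervalIntegrable f'' volume a b) :
    ∫ q in a..b, f q * Real.cos (ω * q) =
      (f b * Real.sin (ω * b) - f a * Real.sin (ω * a)) / ω +
      (f' b * Real.cos (ω * b) - f' a * Real.cos (ω * a) -
        ∫ q in a..b, f'' q * Real.cos (ω * q)) / ω ^ 2 := by
  have hlin (q : ℝ) : HasDerivAt (fun q => ω * q) ω q := by
    simpa using (hasDerivAt_id q).const_mul ω
  have hsin (q : ℝ) : HasDerivAt (fun q => Real.sin (ω * q) / ω) (Real.cos (ω * q)) q := by
    simpa [hω] using (hlin q).sin.div_const ω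
  have hcos (q : ℝ) : HasDerivAt (fun q => -Real.cos (ω * q) / ω) (Real.sin (ω * q)) q := by
    simpa [hω] using (hlin q).cos.neg.div_const ω
  have hf'_int : IntervalIntegrable f' volume a b :=
    ContinuousOn.intervalIntegrable fun q hq => (hf' q hq).continuousAt.continuousWithinAt
  have hparts_cos := intervalIntegral.integral_mul_deriv_eq_deriv_mul hf (fun q _ => hsin q)
    hf'_int (Continuous.intervalIntegrable (by fun_prop) _ _)
  have hparts_sin := intervalIntegral.integral_mul_deriv_eq_deriv_mul hf' (fun q _ => hcos q)
    hf'' (Continuous.intervalIntegrable (by fun_prop) _ _)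
  simp only [mul_neg, neg_div, intervalIntegral.integral_neg, ← mul_div_assoc,
    intervalIntegral.integral_div] at hparts_cos hparts_sin
  rw [hparts_cos, hparts_sin]
  field_simp
  ring

lemma cosCoeff_eq_of_hasDerivAt {f f' f'' : ℝ → ℝ}
    (hf : ∀ q ∈ Set.uIcc (0 : ℝ) 1, HasDerivAt f (f' q) q)
    (hf' : ∀ q ∈ Set.uIcc (0 : ℝ) 1, HasDerivAt f' (f'' q) q)
    (hf'' : IntervalIntegrable f'' volume 0 1) {m : ℕ} (hm : m ≠ 0) :
    cosCoeff f m = (f' 1 - f' 0 - cosCoeff f'' m) / (2 * π * m) ^ 2 := by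
  have hcos : Real.cos (2 * π * m) = 1 := by rw [mul_comm]; exact Real.cos_nat_mul_two_pi m
  have hsin : Real.sin (2 * π * m) = 0 := by
    simpa [mul_comm, mul_left_comm] using Real.sin_nat_mul_pi (2 * m)
  rw [cosCoeff, integral_mul_cos_mul (by positivity) hf hf' hf'']
  simp [hcos, hsin, cosCoeff]

end CosCoeff

section Powers

lemma cosCoeff_pow_add_two (n : ℕ) {m : ℕ} (hm : m ≠ 0) :
    cosCoeff (fun q => q ^ (n + 2)) m =
      (n + 2) * (1 - (n + 1) * cosCoeff (fun q => q ^ n) m) / (2 * π * m) ^ 2 := by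
  have hf (q : ℝ) : HasDerivAt (fun q => q ^ (n + 2)) ((n + 2) * q ^ (n + 1)) q := by
    simpa using hasDerivAt_pow (n + 2) q
  have hf' (q : ℝ) : HasDerivAt (fun q : ℝ => (n + 2) * q ^ (n + 1))
      ((n + 2) * (n + 1) * q ^ n) q := by
    simpa [mul_assoc] using (hasDerivAt_pow (n + 1) q).const_mul ((n : ℝ) + 2)
  rw [cosCoeff_eq_of_hasDerivAt (fun q _ => hf q) (fun q _ => hf' q)
    (Continuous.intervalIntegrable (by fun_prop) _ _) hm, cosCoeff_const_mul, one_pow,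
    zero_pow n.succ_ne_zero]
  ring

lemma cosCoeff_pow (n : ℕ) {m : ℕ} (hm : m ≠ 0) :
    cosCoeff (fun q => q ^ n) m = -(n.factorial * ∑ k ∈ Finset.Icc 1 (n / 2),
      (-1) ^ k / ((2 * π * m) ^ (2 * k) * (n + 1 - 2 * k).factorial)) := by
  induction n using Nat.twoStepInduction with
  | zero =>
    rw [cosCoeff_eq_of_hasDerivAt (f' := fun _ => 0) (f'' := fun _ => 0)
      (by simp [hasDerivAt_const]) (by simp [hasDerivAt_const]) (by simp) hm]
    simp [cosCoeff]
  | one =>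
    rw [cosCoeff_eq_of_hasDerivAt (f' := fun _ => 1) (f'' := fun _ => 0)
      (by simp [hasDerivAt_id']) (by simp [hasDerivAt_const]) (by simp) hm]
    simp [cosCoeff]
  | more n ih _ =>
    have hsplit (g : ℕ → ℝ) :
        ∑ k ∈ Finset.Icc 1 (n / 2 + 1), g k = g 1 + ∑ k ∈ Finset.Icc 1 (n / 2), g (k + 1) := by
      rw [← Finset.Ico_add_one_right_eq_Icc, ← Finset.Ico_add_one_right_eq_Icc,
        Finset.sum_eq_sum_Ico_succ_bot (by omega), ← Finset.sum_Ico_add']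
    have hshift (k : ℕ) : (-1 : ℝ) ^ (k + 1) / ((2 * π * m) ^ (2 * (k + 1)) *
        (n + 2 + 1 - 2 * (k + 1)).factorial) = -(1 / (2 * π * m) ^ 2) *
          ((-1) ^ k / ((2 * π * m) ^ (2 * k) * (n + 1 - 2 * k).factorial)) := by
      rw [show n + 2 + 1 - 2 * (k + 1) = n + 1 - 2 * k by omega]
      field_simp
      ring
    rw [cosCoeff_pow_add_two n hm, ih, Nat.add_div_right n two_pos, hsplit]
    simp only [hshift, ← Finset.mul_sum, mul_zero, Nat.sub_zero, pow_zero, one_mul,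
      Nat.factorial_succ]
    push_cast
    field_simp
    ring

lemma hasSum_cosCoeff_pow_div (n : ℕ) :
    HasSum (fun m : ℕ => cosCoeff (fun q => q ^ n) m / m)
      (-(n.factorial * ∑ k ∈ Finset.Icc 1 (n / 2),
        (-1) ^ k / ((2 * π) ^ (2 * k) * (n + 1 - 2 * k).factorial) *
          ∑' m : ℕ, 1 / (m : ℝ) ^ (2 * k + 1))) := by
  have hterm (m : ℕ) : cosCoeff (fun q => q ^ n) m / m =
      -(n.factorial * ∑ k ∈ Finset.Icc 1 (n / 2),
        (-1) ^ k / ((2 * π) ^ (2 * k) * (n + 1 - 2 * k).factorial) *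
          (1 / (m : ℝ) ^ (2 * k + 1))) := by
    rcases eq_or_ne m 0 with rfl | hm
    · simp
    · rw [cosCoeff_pow n hm, neg_div, mul_div_assoc, Finset.sum_div]
      congr! 3 with k
      rw [mul_pow _ (m : ℝ), pow_succ (m : ℝ)]
      field_simp
  have hsummable {k : ℕ} (hk : k ∈ Finset.Icc 1 (n / 2)) :
      Summable fun m : ℕ => 1 / (m : ℝ) ^ (2 * k + 1) :=
    Real.summable_one_div_nat_pow.2 (by linarith [(Finset.mem_Icc.1 hk).1])
  simp only [hterm]
  exact ((hasSum_sum fun k hk => (hsummable hk).hasSum.mul_left _).mul_left _).neg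

theorem integral_pow_mul_log_sin_eq_sum_tsum (n : ℕ) :
    ∫ q in (0 : ℝ)..1, q ^ n * Real.log (Real.sin (π * q)) =
      -Real.log 2 / (n + 1) + n.factorial * ∑ k ∈ Finset.Icc 1 (n / 2),
        (-1) ^ k / ((2 * π) ^ (2 * k) * (n + 1 - 2 * k).factorial) *
          ∑' m : ℕ, 1 / (m : ℝ) ^ (2 * k + 1) := by
  have hpow : IntervalIntegrable (fun q : ℝ => q ^ n) volume 0 1 :=
    intervalIntegral.intervalIntegrable_pow n
  have hpow_log : IntervalIntegrable (fun q => q ^ n * Real.log (Real.sin (π * q))) volume 0 1 :=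
    (intervalIntegrable_log_sin_pi_mul 0 1).continuousOn_mul (by fun_prop)
  rw [integral_mul_log_sin_of_tendsto_sum_cosCoeff hpow hpow_log
    (hasSum_cosCoeff_pow_div n).tendsto_sum_nat, integral_pow, one_pow, zero_pow n.succ_ne_zero]
  ring

end Powers

/-- For `n ∈ ℕ`,
`∫₀¹ qⁿ ln(sin πq) dq = -ln 2/(n+1) + n! ∑_{k=1}^{⌊n/2⌋} (-1)^k ζ(2k+1)/((2π)^{2k}(n+1-2k)!)`. -/
theorem integral_pow_log_sin (n : ℕ) :
    ((∫ q in (0 : ℝ)..1, q ^ n * Real.log (Real.sin (π * q))) : ℂ) =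
      -(Real.log 2 : ℂ) / (n + 1) +
        (n.factorial : ℂ) * ∑ k ∈ Finset.Icc 1 (n / 2),
          (-1 : ℂ) ^ k * riemannZeta (2 * k + 1) /
            ((2 * (π : ℂ)) ^ (2 * k) * ((n + 1 - 2 * k).factorial : ℂ)) := by
  have hreal := congrArg ((↑) : ℝ → ℂ) (integral_pow_mul_log_sin_eq_sum_tsum n)
  rw [← intervalIntegral.integral_ofReal] at hreal
  push_cast at hreal
  rw [hreal]
  congr! 3 with k hk
  have hzeta : riemannZeta (2 * k + 1) = ∑' m : ℕ, 1 / (m : ℂ) ^ (2 * k + 1) := by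
    have hk1 := (Finset.mem_Icc.1 hk).1
    exact_mod_cast zeta_nat_eq_tsum_of_gt_one (k := 2 * k + 1) (by omega)
  rw [hzeta]
  ring
end

section
/- For real z, z' ≤ 0 with z + z' < 1 (and z, z' not making the expression singular), ∫₀¹ ζ(z',q) ζ(z,q) dq = (2 Γ(1-z) Γ(1-z') / (2π)^{2-z-z'}) ζ(2-z-z') cos(π(z-z')/2). -/
open Real Complex

/-!
If `Re z < 0`, Hurwitz's formula expresses `ζ(z, q)` through the periodic zeta functions
`∑ e^{±2πinq} / n^{1-z}`, whose Fourier series converge absolutely, so for `Re z, Re w < 0` the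
integral of `ζ(w, q) ζ(z, q)` over a period follows from the orthogonality of the characters.

On `0 < q ≤ 1` the function `ζ(z, q)` differs from `q^{-z}` by a quantity bounded locally uniformly
in `z`: for `Re z > -1` this is seen by comparing each term `(n + q)^{-z}` with the linear
interpolation of its values at `q = 0, 1`, the error being `O(n^{-Re z - 2})`.
Hence the integral is holomorphic in each variable on `Re z < 1`, `Re w < 1`, `Re (z + w) < 1`, and
the identity theorem, applied first in `z` and then in `w`, extends the formula to this region.
-/

open Filter Topology Set MeasureTheory HurwitzZeta

lemma differentiableAt_integral_of_dominated {α E : Type*} [MeasurableSpace α] {μ : Measure α}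
    [NormedAddCommGroup E] [NormedSpace ℂ E] {F : ℂ → α → E} {U : Set ℂ} {z₀ : ℂ}
    {bound : α → ℝ} (hU : U ∈ 𝓝 z₀) (hF_meas : ∀ z ∈ U, AEStronglyMeasurable (F z) μ)
    (hF_diff : ∀ᵐ a ∂μ, DifferentiableOn ℂ (F · a) U)
    (hF_bound : ∀ᵐ a ∂μ, ∀ z ∈ U, ‖F z a‖ ≤ bound a) (bound_integrable : Integrable bound μ) :
    DifferentiableAt ℂ (fun z ↦ ∫ a, F z a ∂μ) z₀ := by
  obtain ⟨r, hr, hrU⟩ := Metric.nhds_basis_closedBall.mem_iff.1 hU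
  have hr2 : 0 < r / 2 := half_pos hr
  have closedBall_subset {w : ℂ} (hw : w ∈ Metric.ball z₀ (r / 2)) :
      Metric.closedBall w (r / 2) ⊆ U :=
    (Metric.closedBall_subset_closedBall' (by linarith [Metric.mem_ball.1 hw])).trans hrU
  have hderiv : ∀ᵐ a ∂μ, ∀ w ∈ Metric.ball z₀ (r / 2), HasDerivAt (F · a) (deriv (F · a) w) w := by
    filter_upwards [hF_diff] with a ha w hw
    exact (ha.differentiableAt (mem_of_superset (Metric.closedBall_mem_nhds w hr2)
      (closedBall_subset hw))).hasDerivAt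
  have hderiv_bound : ∀ᵐ a ∂μ, ∀ w ∈ Metric.ball z₀ (r / 2),
      ‖deriv (F · a) w‖ ≤ bound a / (r / 2) := by
    filter_upwards [hF_diff, hF_bound] with a ha hb w hw
    exact norm_deriv_le_of_forall_mem_sphere_norm_le hr2
      (ha.diffContOnCl_ball (closedBall_subset hw))
      fun z hz ↦ hb z (closedBall_subset hw (Metric.sphere_subset_closedBall hz))
  have hderiv_meas : AEStronglyMeasurable (fun a ↦ deriv (F · a) z₀) μ := by
    obtain ⟨x, hx, hxU⟩ := exists_seq_forall_of_frequently
      (eventually_of_mem (mem_nhdsWithin_of_mem_nhds hU) fun _ hz ↦ hz :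
        ∀ᶠ z in 𝓝[≠] z₀, z ∈ U).frequently
    refine aestronglyMeasurable_of_tendsto_ae (f := fun n a ↦ slope (F · a) z₀ (x n)) atTop
      (fun n ↦ ((hF_meas _ (hxU n)).sub (hF_meas _ (mem_of_mem_nhds hU))).const_smul _) ?_
    filter_upwards [hderiv] with a ha
    exact (hasDerivAt_iff_tendsto_slope.1 (ha z₀ (Metric.mem_ball_self hr2))).comp hx
  have hF_int : Integrable (F z₀) μ :=
    bound_integrable.mono' (hF_meas _ (mem_of_mem_nhds hU))
      (hF_bound.mono fun a ha ↦ ha _ (mem_of_mem_nhds hU))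
  exact (hasDerivAt_integral_of_dominated_loc_of_deriv_le (Metric.ball_mem_nhds z₀ hr2)
    (eventually_of_mem hU hF_meas) hF_int hderiv_meas hderiv_bound
    (bound_integrable.div_const _) hderiv).2.differentiableAt

lemma norm_sub_lineMap_le {E : Type*} [NormedAddCommGroup E] [NormedSpace ℝ E]
    {f f' f'' : ℝ → E} {M : ℝ} (hf : ∀ x ∈ Icc (0 : ℝ) 1, HasDerivAt f (f' x) x)
    (hf' : ∀ x ∈ Icc (0 : ℝ) 1, HasDerivAt f' (f'' x) x)
    (hM : ∀ x ∈ Icc (0 : ℝ) 1, ‖f'' x‖ ≤ M) {q : ℝ} (hq : q ∈ Icc (0 : ℝ) 1) :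
    ‖f q - AffineMap.lineMap (f 0) (f 1) q‖ ≤ M := by
  have hzero : (0 : ℝ) ∈ Icc (0 : ℝ) 1 := ⟨le_rfl, zero_le_one⟩
  have hone : (1 : ℝ) ∈ Icc (0 : ℝ) 1 := ⟨zero_le_one, le_rfl⟩
  have hM0 : 0 ≤ M := (norm_nonneg _).trans (hM 0 hzero)
  have f'_sub_le {x : ℝ} (hx : x ∈ Icc (0 : ℝ) 1) : ‖f' x - f' 0‖ ≤ M := by
    refine ((convex_Icc 0 1).norm_image_sub_le_of_norm_hasDerivWithin_le
      (fun y hy ↦ (hf' y hy).hasDerivWithinAt) hM hzero hx).trans ?_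
    simpa [abs_of_nonneg hx.1] using mul_le_of_le_one_right hM0 hx.2
  -- Subtracting the tangent at `0` leaves the interpolation error unchanged.
  set g : ℝ → E := fun x ↦ f x - x • f' 0
  have hg {x : ℝ} (hx : x ∈ Icc (0 : ℝ) 1) : HasDerivAt g (f' x - f' 0) x :=
    ((hf x hx).sub ((hasDerivAt_id x).smul_const (f' 0))).congr_deriv (by rw [one_smul])
  have g_sub_le {x y : ℝ} (hx : x ∈ Icc (0 : ℝ) 1) (hy : y ∈ Icc (0 : ℝ) 1) :
      ‖g y - g x‖ ≤ M := by
    refine ((convex_Icc 0 1).norm_image_sub_le_of_norm_hasDerivWithin_le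
      (fun z hz ↦ (hg hz).hasDerivWithinAt) (fun z hz ↦ f'_sub_le hz) hx hy).trans ?_
    exact mul_le_of_le_one_right hM0 (abs_le.2 ⟨by linarith [hx.2, hy.1], by linarith [hx.1, hy.2]⟩)
  have herr : f q - AffineMap.lineMap (f 0) (f 1) q =
      AffineMap.lineMap (g q - g 0) (g q - g 1) q := by
    simp only [AffineMap.lineMap_apply_module, g]
    module
  rw [herr, ← dist_zero_right]
  exact (convex_closedBall (0 : E) M).lineMap_mem
    (by simpa using g_sub_le hzero hq) (by simpa using g_sub_le hone hq) hq

/-- The error at `m + q` made by interpolating `x ↦ x ^ (-s)` linearly between `m` and `m + 1`.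
Summed over `m = 1, 2, 3, …` it continues `ζ(s, q)` to `-1 < Re s`. -/
noncomputable def powInterpolationError (m : ℝ) (s : ℂ) (q : ℝ) : ℂ :=
  (m + q : ℂ) ^ (-s) - AffineMap.lineMap ((m : ℂ) ^ (-s)) ((m + 1 : ℂ) ^ (-s)) q

lemma hasDerivAt_const_add_ofReal_cpow {m x : ℝ} (hmx : 0 < m + x) (r : ℂ) :
    HasDerivAt (fun y : ℝ ↦ (m + y : ℂ) ^ r) (r * (m + x : ℂ) ^ (r - 1)) x := by
  have hslit : (m + x : ℂ) ∈ slitPlane := Or.inl (by simpa using hmx)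
  simpa using! (((hasDerivAt_id (x : ℂ)).const_add (m : ℂ)).cpow_const
    (c := r) hslit).comp_ofReal

lemma norm_powInterpolationError_le {m : ℝ} (hm : 0 < m) {s : ℂ} (hs : -2 ≤ s.re) {q : ℝ}
    (hq : q ∈ Icc (0 : ℝ) 1) :
    ‖powInterpolationError m s q‖ ≤ ‖s‖ * ‖s + 1‖ * m ^ (-s.re - 2) := by
  have hpos {x : ℝ} (hx : x ∈ Icc (0 : ℝ) 1) : 0 < m + x := add_pos_of_pos_of_nonneg hm hx.1
  have hf {x : ℝ} (hx : x ∈ Icc (0 : ℝ) 1) := hasDerivAt_const_add_ofReal_cpow (hpos hx) (-s)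
  have hf' {x : ℝ} (hx : x ∈ Icc (0 : ℝ) 1) :=
    (hasDerivAt_const_add_ofReal_cpow (hpos hx) (-s - 1)).const_mul (-s)
  have hf'' {x : ℝ} (hx : x ∈ Icc (0 : ℝ) 1) :
      ‖-s * ((-s - 1) * (m + x : ℂ) ^ (-s - 1 - 1))‖ ≤ ‖s‖ * ‖s + 1‖ * m ^ (-s.re - 2) := by
    have hre : (-s - 1 - 1).re = -s.re - 2 := by
      simp only [sub_re, neg_re, one_re]
      ring
    have hnorm : ‖-s - 1‖ = ‖s + 1‖ := by rw [← norm_neg]; congr 1; ring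
    rw [norm_mul, norm_mul, norm_neg, hnorm, ← ofReal_add, norm_cpow_eq_rpow_re_of_pos (hpos hx),
      hre, mul_assoc]
    gcongr ‖s‖ * (‖s + 1‖ * ?_)
    exact Real.rpow_le_rpow_of_nonpos hm (by linarith [hx.1]) (by linarith)
  simpa [powInterpolationError] using
    norm_sub_lineMap_le (fun x hx ↦ hf hx) (fun x hx ↦ hf' hx) (fun x hx ↦ hf'' hx) hq

lemma differentiable_powInterpolationError {m : ℝ} (hm : 0 < m) {q : ℝ} (hq : 0 ≤ q) :
    Differentiable ℂ fun s ↦ powInterpolationError m s q := by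
  have hdiff {x : ℝ} (hx : 0 < x) : Differentiable ℂ fun s : ℂ ↦ (x : ℂ) ^ (-s) := fun s ↦
    differentiableAt_id.neg.const_cpow (Or.inl (ofReal_ne_zero.2 hx.ne'))
  have h₀ := hdiff hm
  have h₁ := hdiff (show 0 < m + 1 by positivity)
  have h₂ := hdiff (show 0 < m + q by positivity)
  push_cast at h₁ h₂
  simp only [powInterpolationError, AffineMap.lineMap_apply_module]
  exact h₂.sub ((h₀.const_smul _).add (h₁.const_smul _))

lemma continuousOn_powInterpolationError {m : ℝ} (hm : 0 < m) (s : ℂ) :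
    ContinuousOn (powInterpolationError m s) (Icc 0 1) := by
  have hpow : ContinuousOn (fun q : ℝ ↦ (m + q : ℂ) ^ (-s)) (Icc 0 1) := fun q hq ↦
    (hasDerivAt_const_add_ofReal_cpow (add_pos_of_pos_of_nonneg hm hq.1) _).continuousAt
      |>.continuousWithinAt
  exact hpow.sub (AffineMap.lineMap_continuous.continuousOn)

lemma exists_summable_powInterpolationError_le {s₀ : ℂ} (hs₀ : -1 < s₀.re) :
    ∃ u : ℕ → ℝ, Summable u ∧ ∀ᶠ s in 𝓝 s₀, ∀ n : ℕ, ∀ q ∈ Icc (0 : ℝ) 1,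
      ‖powInterpolationError (n + 1) s q‖ ≤ u n := by
  obtain ⟨σ, hσ, hσs₀⟩ := exists_between hs₀
  set C : ℝ := ‖s₀‖ * ‖s₀ + 1‖ + 1
  refine ⟨fun n ↦ C * ((n + 1 : ℕ) : ℝ) ^ (-σ - 2), ?_, ?_⟩
  · exact ((summable_nat_add_iff 1).2 (Real.summable_nat_rpow.2 (by linarith))).mul_left C
  have hnorm : ∀ᶠ s in 𝓝 s₀, ‖s‖ * ‖s + 1‖ < C :=
    ContinuousAt.eventually_lt (by fun_prop) continuousAt_const (lt_add_one _)
  filter_upwards [hnorm, continuous_re.continuousAt.eventually_const_lt hσs₀] with s hsC hσs n q hq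
  have hn : (1 : ℝ) ≤ n + 1 := le_add_of_nonneg_left n.cast_nonneg
  calc ‖powInterpolationError (n + 1) s q‖
      ≤ ‖s‖ * ‖s + 1‖ * (n + 1 : ℝ) ^ (-s.re - 2) :=
        norm_powInterpolationError_le (by positivity) (by linarith) hq
    _ ≤ C * (n + 1 : ℝ) ^ (-σ - 2) := by gcongr
    _ = C * ((n + 1 : ℕ) : ℝ) ^ (-σ - 2) := by rw [Nat.cast_succ]

lemma hasSum_powInterpolationError_of_one_lt_re {s : ℂ} (hs : 1 < s.re) {q : ℝ}
    (hq : q ∈ Icc (0 : ℝ) 1) :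
    HasSum (fun n : ℕ ↦ powInterpolationError (n + 1) s q)
      (hurwitzZeta q s - (q : ℂ) ^ (-s) - riemannZeta s + q) := by
  have hzeta : HasSum (fun n : ℕ ↦ (n + 1 : ℂ) ^ (-s)) (riemannZeta s) := by
    simpa [cpow_neg, ← hurwitzZeta_zero, ← AddCircle.coe_period (1 : ℝ)] using
      hasSum_hurwitzZeta_of_one_lt_re (a := 1) (by simp) hs
  have hzeta_tail : HasSum (fun n : ℕ ↦ (n + 1 + 1 : ℂ) ^ (-s)) (riemannZeta s - 1) := by
    simpa using (hasSum_nat_add_iff' 1).2 hzeta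
  have hhurwitz_tail : HasSum (fun n : ℕ ↦ (n + 1 + q : ℂ) ^ (-s))
      (hurwitzZeta q s - (q : ℂ) ^ (-s)) := by
    simpa [cpow_neg] using (hasSum_nat_add_iff' 1).2 (hasSum_hurwitzZeta_of_one_lt_re hq hs)
  have hsum := hhurwitz_tail.sub
    ((hzeta.mul_left (1 - q : ℂ)).add (hzeta_tail.mul_left (q : ℂ)))
  convert! hsum using 1
  · ext n
    simp [powInterpolationError, AffineMap.lineMap_apply_module]
  · ring

lemma differentiableOn_tsum_powInterpolationError {q : ℝ} (hq : q ∈ Icc (0 : ℝ) 1) :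
    DifferentiableOn ℂ (fun s ↦ ∑' n : ℕ, powInterpolationError (n + 1) s q) {s | -1 < s.re} := by
  intro s₀ hs₀
  obtain ⟨u, hu, hle⟩ := exists_summable_powInterpolationError_le hs₀
  obtain ⟨U, hUle, hU, hs₀U⟩ := eventually_nhds_iff.1 hle
  exact ((differentiableOn_tsum_of_summable_norm hu
    (fun n ↦ (differentiable_powInterpolationError (by positivity) hq.1).differentiableOn) hU
    fun n s hs ↦ hUle s hs n q hq).differentiableAt (hU.mem_nhds hs₀U)).differentiableWithinAt

lemma hurwitzZeta_eq_tsum_powInterpolationError {s : ℂ} (hs : -1 < s.re) {q : ℝ}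
    (hq : q ∈ Ioc (0 : ℝ) 1) :
    hurwitzZeta q s =
      (q : ℂ) ^ (-s) + riemannZeta s - q + ∑' n : ℕ, powInterpolationError (n + 1) s q := by
  have hopen : IsOpen {s : ℂ | -1 < s.re} := isOpen_lt continuous_const continuous_re
  have hq' : q ∈ Icc (0 : ℝ) 1 := Ioc_subset_Icc_self hq
  have hpow : Differentiable ℂ fun s : ℂ ↦ (q : ℂ) ^ (-s) := fun s ↦
    differentiableAt_id.neg.const_cpow (Or.inl (ofReal_ne_zero.2 hq.1.ne'))
  have hleft : Differentiable ℂ fun s ↦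
      hurwitzZeta q s - hurwitzZeta 0 s - (q : ℂ) ^ (-s) + q :=
    ((differentiable_hurwitzZeta_sub_hurwitzZeta _ _).sub hpow).add_const _
  have heq : EqOn (fun s ↦ hurwitzZeta q s - hurwitzZeta 0 s - (q : ℂ) ^ (-s) + q)
      (fun s ↦ ∑' n : ℕ, powInterpolationError (n + 1) s q) {s | -1 < s.re} := by
    refine (hleft.differentiableOn.analyticOnNhd hopen).eqOn_of_preconnected_of_eventuallyEq
      ((differentiableOn_tsum_powInterpolationError hq').analyticOnNhd hopen)
      (convex_halfSpace_re_gt (-1)).isPreconnected (z₀ := 2) (by norm_num) ?_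
    filter_upwards [continuous_re.continuousAt.eventually_const_lt
      (show (1 : ℝ) < (2 : ℂ).re by simp)] with s hs
    rw [(hasSum_powInterpolationError_of_one_lt_re hs hq').tsum_eq, hurwitzZeta_zero]
    ring
  have hs_eq := heq hs
  simp only [hurwitzZeta_zero] at hs_eq
  rw [← hs_eq]
  ring

lemma hasSum_fourier_div_cpow {s : ℂ} (hs : 1 < s.re) (a : UnitAddCircle) :
    HasSum (fun n : ℕ ↦ fourier n a / (n : ℂ) ^ s) (expZeta a s) := by
  induction a using QuotientAddGroup.induction_on with | H q =>
  convert! hasSum_expZeta_of_one_lt_re q hs using 3 with n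
  rw [fourier_coe_apply]
  push_cast
  congr 1
  ring

lemma norm_fourier_div_cpow_le {s : ℂ} (n : ℕ) (a : UnitAddCircle) :
    ‖fourier n a / (n : ℂ) ^ s‖ ≤ 1 / (n : ℝ) ^ s.re := by
  rcases n.eq_zero_or_pos with rfl | hn
  · rcases eq_or_ne s 0 with rfl | hs
    · simp
    · simpa [zero_cpow hs] using Real.rpow_nonneg le_rfl s.re
  · rw [norm_div, norm_natCast_cpow_of_pos hn, fourier_apply, Circle.norm_coe]

lemma continuous_expZeta {s : ℂ} (hs : 1 < s.re) : Continuous fun a ↦ expZeta a s := by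
  simp_rw [← fun a ↦ (hasSum_fourier_div_cpow hs a).tsum_eq]
  exact continuous_tsum (fun n ↦ (fourier n).continuous.div_const _)
    (Real.summable_one_div_nat_rpow.2 hs) norm_fourier_div_cpow_le

lemma norm_expZeta_le {s : ℂ} (hs : 1 < s.re) (a : UnitAddCircle) :
    ‖expZeta a s‖ ≤ ‖riemannZeta s.re‖ := by
  have hzeta : ((∑' n : ℕ, 1 / (n : ℝ) ^ s.re : ℝ) : ℂ) = riemannZeta s.re := by
    rw [zeta_eq_tsum_one_div_nat_cpow (by simpa using hs)]
    push_cast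
    simp_rw [ofReal_cpow (Nat.cast_nonneg _), ofReal_natCast]
  rw [← hzeta, ← (hasSum_fourier_div_cpow hs a).tsum_eq]
  exact (tsum_of_norm_bounded (Real.summable_one_div_nat_rpow.2 hs).hasSum
    fun n ↦ norm_fourier_div_cpow_le n a).trans (Real.le_norm_self _ |>.trans_eq (norm_real _).symm)

lemma hasSum_integral_expZeta_mul {s : ℂ} (hs : 1 < s.re) {g : UnitAddCircle → ℂ}
    (hg : Integrable g AddCircle.haarAddCircle) :
    HasSum (fun n : ℕ ↦ fourierCoeff g (-n) / (n : ℂ) ^ s)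
      (∫ a, expZeta a s * g a ∂AddCircle.haarAddCircle) := by
  have hsum := hasSum_integral_of_dominated_convergence (μ := AddCircle.haarAddCircle)
    (F := fun (n : ℕ) a ↦ fourier n a / (n : ℂ) ^ s * g a)
    (f := fun a ↦ expZeta a s * g a) (fun n a ↦ 1 / (n : ℝ) ^ s.re * ‖g a‖)
    (fun n ↦ ((fourier n).continuous.div_const _).aestronglyMeasurable.mul
      hg.aestronglyMeasurable)
    (fun n ↦ .of_forall fun a ↦ by
      rw [norm_mul]
      exact mul_le_mul_of_nonneg_right (norm_fourier_div_cpow_le n a) (norm_nonneg _))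
    (.of_forall fun a ↦ (Real.summable_one_div_nat_rpow.2 hs).mul_right _)
    (by simpa only [tsum_mul_right] using hg.norm.const_mul _)
    (.of_forall fun a ↦ (hasSum_fourier_div_cpow hs a).mul_right _)
  convert! hsum using 2 with n
  simp_rw [fourierCoeff, neg_neg, smul_eq_mul, div_mul_eq_mul_div, integral_div]

lemma fourierCoeff_comp_neg {T : ℝ} [Fact (0 < T)] {E : Type*} [NormedAddCommGroup E]
    [NormedSpace ℂ E] (f : AddCircle T → E) (n : ℤ) :
    fourierCoeff (fun a ↦ f (-a)) n = fourierCoeff f (-n) := by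
  rw [fourierCoeff, fourierCoeff, ← integral_neg_eq_self]
  simp [fourier_apply]

lemma hasSum_fourierCoeff_expZeta {s : ℂ} (hs : 1 < s.re) (k : ℤ) :
    HasSum (fun n : ℕ ↦ if (n : ℤ) = k then 1 / (n : ℂ) ^ s else 0)
      (fourierCoeff (expZeta · s) k) := by
  have hint : Integrable (fourier (-k) : UnitAddCircle → ℂ) AddCircle.haarAddCircle :=
    (fourier (-k)).continuous.integrable_of_hasCompactSupport (.of_compactSpace _)
  convert! hasSum_integral_expZeta_mul hs hint using 1
  · ext n
    simp [fourierCoeff_fourier, Pi.single_apply, ite_div]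
  · simp only [fourierCoeff, smul_eq_mul, mul_comm]

lemma fourierCoeff_expZeta_natCast {s : ℂ} (hs : 1 < s.re) (m : ℕ) :
    fourierCoeff (expZeta · s) m = 1 / (m : ℂ) ^ s := by
  refine (hasSum_fourierCoeff_expZeta hs m).unique ?_
  simpa using hasSum_single m (f := fun n : ℕ ↦ if (n : ℤ) = m then 1 / (n : ℂ) ^ s else 0)
    fun n hn ↦ if_neg (by exact_mod_cast hn)

lemma fourierCoeff_expZeta_neg_natCast {s : ℂ} (hs : 1 < s.re) (m : ℕ) :
    fourierCoeff (expZeta · s) (-m) = 0 := by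
  have hs0 : s ≠ 0 := by rintro rfl; norm_num at hs
  refine (hasSum_fourierCoeff_expZeta hs (-m)).unique ?_
  convert! hasSum_zero with n
  split_ifs with h
  · obtain rfl : n = 0 := by omega
    simp [zero_cpow hs0]
  · rfl

lemma ne_neg_natCast_of_re_pos {s : ℂ} (hs : 0 < s.re) (n : ℕ) : s ≠ -n := by
  rintro rfl
  rw [neg_re, natCast_re, neg_pos] at hs
  exact hs.not_ge n.cast_nonneg

lemma integrable_expZeta {s : ℂ} (hs : 1 < s.re) :
    Integrable (expZeta · s) AddCircle.haarAddCircle :=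
  (continuous_expZeta hs).integrable_of_hasCompactSupport (.of_compactSpace _)

lemma integral_expZeta_mul_expZeta {s t : ℂ} (hs : 1 < s.re) (ht : 1 < t.re) :
    ∫ a, expZeta a s * expZeta a t ∂AddCircle.haarAddCircle = 0 := by
  refine (hasSum_integral_expZeta_mul hs (integrable_expZeta ht)).unique ?_
  simp only [fourierCoeff_expZeta_neg_natCast ht, zero_div, hasSum_zero]

lemma integral_expZeta_mul_expZeta_neg {s t : ℂ} (hs : 1 < s.re) (ht : 1 < t.re) :
    ∫ a, expZeta a s * expZeta (-a) t ∂AddCircle.haarAddCircle = riemannZeta (s + t) := by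
  have hst : 1 < (s + t).re := by rw [add_re]; linarith
  have hcoeff (n : ℕ) : fourierCoeff (fun a ↦ expZeta (-a) t) (-n) / (n : ℂ) ^ s =
      1 / (n : ℂ) ^ (s + t) := by
    rw [fourierCoeff_comp_neg (expZeta · t), neg_neg, fourierCoeff_expZeta_natCast ht, div_div]
    rcases n.eq_zero_or_pos with rfl | hn
    · rw [Nat.cast_zero, zero_cpow (ne_zero_of_one_lt_re hs), mul_zero,
        zero_cpow (ne_zero_of_one_lt_re hst)]
    · rw [cpow_add _ _ (by exact_mod_cast hn.ne'), mul_comm]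
  have hsum := hasSum_integral_expZeta_mul hs (integrable_expZeta ht).comp_neg
  simp only [hcoeff] at hsum
  rw [← hsum.tsum_eq, zeta_eq_tsum_one_div_nat_cpow hst]

lemma hurwitzZeta_eq_expZeta_of_re_neg {z : ℂ} (hz : z.re < 0) (a : UnitAddCircle) :
    hurwitzZeta a z = (2 * π) ^ (z - 1) * Complex.Gamma (1 - z) *
      (cexp (-π * I * (1 - z) / 2) * expZeta a (1 - z) +
        cexp (π * I * (1 - z) / 2) * expZeta (-a) (1 - z)) := by
  have hre : 0 < (1 - z).re := by rw [sub_re, one_re]; linarith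
  have hne_one : 1 - z ≠ 1 := by
    rw [Ne, sub_eq_self]
    rintro rfl
    exact hz.false
  simpa using hurwitzZeta_one_sub a (ne_neg_natCast_of_re_pos hre) (.inr hne_one)

lemma continuous_hurwitzZeta_of_re_neg {z : ℂ} (hz : z.re < 0) :
    Continuous fun a ↦ hurwitzZeta a z := by
  have hexp : Continuous fun a ↦ expZeta a (1 - z) :=
    continuous_expZeta (by rw [sub_re, one_re]; linarith)
  simp_rw [hurwitzZeta_eq_expZeta_of_re_neg hz]
  fun_prop

lemma exists_norm_hurwitzZeta_le_of_re_neg {z₀ : ℂ} (hz₀ : z₀.re < 0) :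
    ∃ C : ℝ, ∀ᶠ z in 𝓝 z₀, ∀ a, ‖hurwitzZeta a z‖ ≤ C := by
  set bound : ℂ → ℝ := fun z ↦ ‖(2 * π : ℂ) ^ (z - 1) * Complex.Gamma (1 - z)‖ *
    (‖cexp (-π * I * (1 - z) / 2)‖ * ‖riemannZeta ((1 - z).re : ℂ)‖ +
      ‖cexp (π * I * (1 - z) / 2)‖ * ‖riemannZeta ((1 - z).re : ℂ)‖)
  have hre {z : ℂ} (hz : z.re < 0) : 1 < (1 - z).re := by rw [sub_re, one_re]; linarith
  have hbound : ContinuousAt bound z₀ := by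
    have hpow : ContinuousAt (fun z : ℂ ↦ (2 * π : ℂ) ^ (z - 1)) z₀ :=
      ContinuousAt.const_cpow (by fun_prop) (.inl (by exact_mod_cast Real.two_pi_pos.ne'))
    have hGamma : ContinuousAt (fun z ↦ Complex.Gamma (1 - z)) z₀ :=
      (differentiableAt_Gamma _ (ne_neg_natCast_of_re_pos
        (zero_lt_one.trans (hre hz₀)))).continuousAt.comp (by fun_prop)
    have hzeta : ContinuousAt (fun z : ℂ ↦ riemannZeta ((1 - z).re : ℂ)) z₀ :=
      (differentiableAt_riemannZeta (by exact_mod_cast (hre hz₀).ne')).continuousAt.comp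
        (f := fun z : ℂ ↦ ((1 - z).re : ℂ)) (by fun_prop)
    fun_prop
  refine ⟨bound z₀ + 1, ?_⟩
  filter_upwards [hbound.eventually_lt continuousAt_const (lt_add_one _),
    continuous_re.continuousAt.eventually_lt_const hz₀] with z hzbound hz a
  refine le_trans ?_ hzbound.le
  rw [hurwitzZeta_eq_expZeta_of_re_neg hz, norm_mul]
  refine mul_le_mul_of_nonneg_left ((norm_add_le _ _).trans ?_) (norm_nonneg _)
  rw [norm_mul, norm_mul]
  gcongr <;> exact norm_expZeta_le (hre hz) _

lemma exists_norm_hurwitzZeta_sub_cpow_le {z₀ : ℂ} (hz₀ : -1 < z₀.re) (hz₀_one : z₀ ≠ 1) :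
    ∃ C : ℝ, ∀ᶠ z in 𝓝 z₀, ∀ q ∈ Ioc (0 : ℝ) 1, ‖hurwitzZeta q z - (q : ℂ) ^ (-z)‖ ≤ C := by
  obtain ⟨u, hu, hle⟩ := exists_summable_powInterpolationError_le hz₀
  have hzeta : ContinuousAt (fun z ↦ ‖riemannZeta z‖) z₀ :=
    (differentiableAt_riemannZeta hz₀_one).continuousAt.norm
  refine ⟨‖riemannZeta z₀‖ + 1 + 1 + ∑' n, u n, ?_⟩
  filter_upwards [hle, hzeta.eventually_lt continuousAt_const (lt_add_one _),
    continuous_re.continuousAt.eventually_const_lt hz₀] with z hz_le hz_zeta hz q hq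
  have hq_norm : ‖(q : ℂ)‖ ≤ 1 := by rw [Complex.norm_of_nonneg hq.1.le]; exact hq.2
  have htsum : ‖∑' n : ℕ, powInterpolationError (n + 1) z q‖ ≤ ∑' n, u n :=
    tsum_of_norm_bounded hu.hasSum fun n ↦ hz_le n q (Ioc_subset_Icc_self hq)
  calc ‖hurwitzZeta q z - (q : ℂ) ^ (-z)‖
      = ‖riemannZeta z - q + ∑' n : ℕ, powInterpolationError (n + 1) z q‖ := by
        rw [hurwitzZeta_eq_tsum_powInterpolationError hz hq]; congr 1; ring
    _ ≤ ‖riemannZeta z‖ + ‖(q : ℂ)‖ + ‖∑' n : ℕ, powInterpolationError (n + 1) z q‖ :=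
        (norm_add_le _ _).trans (by gcongr; exact norm_sub_le _ _)
    _ ≤ ‖riemannZeta z₀‖ + 1 + 1 + ∑' n, u n := by gcongr

lemma exists_norm_hurwitzZeta_le_rpow {z₀ : ℂ} (hz₀ : z₀ ≠ 1) {r : ℝ} (hr : 0 ≤ r)
    (hz₀r : z₀.re < r) :
    ∃ C : ℝ, ∀ᶠ z in 𝓝 z₀, ∀ q ∈ Ioc (0 : ℝ) 1, ‖hurwitzZeta q z‖ ≤ C * q ^ (-r) := by
  have one_le_rpow {q : ℝ} (hq : q ∈ Ioc (0 : ℝ) 1) : 1 ≤ q ^ (-r) :=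
    Real.one_le_rpow_of_pos_of_le_one_of_nonpos hq.1 hq.2 (neg_nonpos.2 hr)
  rcases lt_or_ge z₀.re 0 with hneg | hnonneg
  · obtain ⟨C, hC⟩ := exists_norm_hurwitzZeta_le_of_re_neg hneg
    refine ⟨C, hC.mono fun z hz q hq ↦ (hz q).trans ?_⟩
    exact le_mul_of_one_le_right ((norm_nonneg _).trans (hz 0)) (one_le_rpow hq)
  · obtain ⟨C, hC⟩ := exists_norm_hurwitzZeta_sub_cpow_le (by linarith) hz₀
    refine ⟨C + 1, ?_⟩
    filter_upwards [hC, continuous_re.continuousAt.eventually_lt_const hz₀r] with z hz hzr q hq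
    have hC0 : 0 ≤ C := (norm_nonneg _).trans (hz q hq)
    have hpow : ‖(q : ℂ) ^ (-z)‖ ≤ q ^ (-r) := by
      rw [norm_cpow_eq_rpow_re_of_pos hq.1, neg_re]
      exact Real.rpow_le_rpow_of_exponent_ge hq.1 hq.2 (by linarith)
    calc ‖hurwitzZeta q z‖ ≤ ‖hurwitzZeta q z - (q : ℂ) ^ (-z)‖ + ‖(q : ℂ) ^ (-z)‖ := by
          simpa using norm_add_le (hurwitzZeta q z - (q : ℂ) ^ (-z)) ((q : ℂ) ^ (-z))
      _ ≤ C * q ^ (-r) + q ^ (-r) :=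
          add_le_add ((hz q hq).trans (le_mul_of_one_le_right hC0 (one_le_rpow hq))) hpow
      _ = (C + 1) * q ^ (-r) := by ring

lemma continuousOn_hurwitzZeta (z : ℂ) :
    ContinuousOn (fun q : ℝ ↦ hurwitzZeta q z) (Ioc 0 1) := by
  rcases lt_or_ge z.re 0 with hneg | hnonneg
  · exact ((continuous_hurwitzZeta_of_re_neg hneg).comp (AddCircle.continuous_mk' 1)).continuousOn
  · have hz' : -1 < z.re := by linarith
    obtain ⟨u, hu, hle⟩ := exists_summable_powInterpolationError_le hz'
    have htsum : ContinuousOn (fun q ↦ ∑' n : ℕ, powInterpolationError (n + 1) z q) (Ioc 0 1) :=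
      (continuousOn_tsum (fun n ↦ continuousOn_powInterpolationError (by positivity) z) hu
        fun n q hq ↦ hle.self_of_nhds n q hq).mono Ioc_subset_Icc_self
    have hpow : ContinuousOn (fun q : ℝ ↦ (q : ℂ) ^ (-z)) (Ioc 0 1) :=
      continuous_ofReal.continuousOn.cpow_const fun q hq ↦ .inl (by simpa using hq.1)
    refine (((hpow.add continuousOn_const).sub continuous_ofReal.continuousOn).add
      htsum).congr fun q hq ↦ hurwitzZeta_eq_tsum_powInterpolationError hz' hq

/-- The closed form of `∫₀¹ ζ(w, q) ζ(z, q) dq`, as a function of the two exponents. -/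
noncomputable def hurwitzZetaMulValue (z w : ℂ) : ℂ :=
  2 * Complex.Gamma (1 - z) * Complex.Gamma (1 - w) / (2 * π) ^ (2 - z - w) *
    riemannZeta (2 - z - w) * Complex.cos (π * (z - w) / 2)

lemma hurwitzZetaMulValue_comm (z w : ℂ) : hurwitzZetaMulValue z w = hurwitzZetaMulValue w z := by
  have hcos : Complex.cos (π * (z - w) / 2) = Complex.cos (π * (w - z) / 2) := by
    rw [← Complex.cos_neg]; congr 1; ring
  rw [hurwitzZetaMulValue, hurwitzZetaMulValue, hcos, sub_right_comm 2 z w,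
    mul_right_comm 2 (Complex.Gamma (1 - z))]

lemma differentiableAt_hurwitzZetaMulValue {z w : ℂ} (hz : z.re < 1) (hzw : (z + w).re < 1) :
    DifferentiableAt ℂ (hurwitzZetaMulValue · w) z := by
  have htwo_pi : (2 * π : ℂ) ≠ 0 := by exact_mod_cast Real.two_pi_pos.ne'
  have hGamma : DifferentiableAt ℂ (fun z ↦ Complex.Gamma (1 - z)) z :=
    (differentiableAt_Gamma _ (ne_neg_natCast_of_re_pos (by simpa using hz))).comp z (by fun_prop)
  have hpow : DifferentiableAt ℂ (fun z ↦ (2 * π : ℂ) ^ (2 - z - w)) z :=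
    DifferentiableAt.const_cpow (by fun_prop) (.inl htwo_pi)
  have hne_one : 2 - z - w ≠ 1 := fun h ↦ by
    have hre := congrArg re h
    simp only [sub_re, re_ofNat, one_re] at hre
    rw [add_re] at hzw
    linarith
  have hzeta : DifferentiableAt ℂ (fun z ↦ riemannZeta (2 - z - w)) z :=
    (differentiableAt_riemannZeta hne_one).comp z (f := fun z ↦ 2 - z - w) (by fun_prop)
  have hpow_ne : (2 * π : ℂ) ^ (2 - z - w) ≠ 0 := by simp [cpow_eq_zero_iff, htwo_pi]
  unfold hurwitzZetaMulValue
  fun_prop (disch := assumption)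

lemma integral_expZeta_add_mul_expZeta_add {s t : ℂ} (hs : 1 < s.re) (ht : 1 < t.re)
    (a b c d : ℂ) :
    ∫ x, (a * expZeta x s + b * expZeta (-x) s) * (c * expZeta x t + d * expZeta (-x) t)
      ∂AddCircle.haarAddCircle = (a * d + b * c) * riemannZeta (s + t) := by
  have hcont_s := continuous_expZeta hs
  have hcont_t := continuous_expZeta ht
  have hint {f : UnitAddCircle → ℂ} (hf : Continuous f) : Integrable f AddCircle.haarAddCircle :=
    hf.integrable_of_hasCompactSupport (.of_compactSpace _)
  have hneg : ∫ x, expZeta (-x) s * expZeta (-x) t ∂AddCircle.haarAddCircle = 0 := by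
    rw [integral_neg_eq_self (fun x ↦ expZeta x s * expZeta x t),
      integral_expZeta_mul_expZeta hs ht]
  have hneg_mul : ∫ x, expZeta (-x) s * expZeta x t ∂AddCircle.haarAddCircle =
      riemannZeta (s + t) := by
    simp_rw [mul_comm (expZeta _ s), integral_expZeta_mul_expZeta_neg ht hs, add_comm]
  calc _ = ∫ x, (a * c * (expZeta x s * expZeta x t) + a * d * (expZeta x s * expZeta (-x) t)) +
        (b * c * (expZeta (-x) s * expZeta x t) + b * d * (expZeta (-x) s * expZeta (-x) t))
          ∂AddCircle.haarAddCircle := by congr 1 with x; ring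
    _ = (a * c * 0 + a * d * riemannZeta (s + t)) + (b * c * riemannZeta (s + t) + b * d * 0) := by
      rw [integral_add, integral_add, integral_add]
      · simp only [integral_const_mul, integral_expZeta_mul_expZeta hs ht,
          integral_expZeta_mul_expZeta_neg hs ht, hneg, hneg_mul]
      all_goals exact hint (by fun_prop)
    _ = (a * d + b * c) * riemannZeta (s + t) := by ring

lemma intervalIntegral_zero_one_eq_integral_haarAddCircle {E : Type*} [NormedAddCommGroup E]
    [NormedSpace ℝ E] (f : UnitAddCircle → E) :
    ∫ q in (0 : ℝ)..1, f q = ∫ a, f a ∂AddCircle.haarAddCircle := by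
  have hvolume : (volume : Measure UnitAddCircle) = AddCircle.haarAddCircle := by
    simp [AddCircle.volume_eq_smul_haarAddCircle]
  rw [← hvolume, ← UnitAddCircle.intervalIntegral_preimage 0, zero_add]

lemma exp_mul_exp_add_exp_mul_exp_eq_two_mul_cos (z w : ℂ) :
    cexp (-π * I * (1 - w) / 2) * cexp (π * I * (1 - z) / 2) +
      cexp (π * I * (1 - w) / 2) * cexp (-π * I * (1 - z) / 2) =
    2 * Complex.cos (π * (z - w) / 2) := by
  rw [Complex.two_cos, ← Complex.exp_add, ← Complex.exp_add, add_comm]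
  ring_nf

lemma integral_hurwitzZeta_mul_hurwitzZeta_of_re_neg {z w : ℂ} (hz : z.re < 0) (hw : w.re < 0) :
    ∫ q in (0 : ℝ)..1, hurwitzZeta q w * hurwitzZeta q z = hurwitzZetaMulValue z w := by
  have one_lt_re {s : ℂ} (hs : s.re < 0) : 1 < (1 - s).re := by rw [sub_re, one_re]; linarith
  have hpow : (2 * π : ℂ) ^ (w - 1) * (2 * π) ^ (z - 1) =
      ((2 * π : ℂ) ^ (2 - z - w))⁻¹ := by
    rw [← cpow_add _ _ (by exact_mod_cast Real.two_pi_pos.ne'), ← cpow_neg]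
    congr 1
    ring
  calc ∫ q in (0 : ℝ)..1, hurwitzZeta q w * hurwitzZeta q z
      = ∫ a, hurwitzZeta a w * hurwitzZeta a z ∂AddCircle.haarAddCircle :=
        intervalIntegral_zero_one_eq_integral_haarAddCircle
          fun a ↦ hurwitzZeta a w * hurwitzZeta a z
    _ = ((2 * π) ^ (w - 1) * (2 * π) ^ (z - 1)) *
          (Complex.Gamma (1 - w) * Complex.Gamma (1 - z)) *
          (2 * Complex.cos (π * (z - w) / 2) * riemannZeta (1 - w + (1 - z))) := by
        simp_rw [hurwitzZeta_eq_expZeta_of_re_neg hw, hurwitzZeta_eq_expZeta_of_re_neg hz,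
          mul_mul_mul_comm _ (_ + _), integral_const_mul,
          integral_expZeta_add_mul_expZeta_add (one_lt_re hw) (one_lt_re hz),
          exp_mul_exp_add_exp_mul_exp_eq_two_mul_cos, mul_mul_mul_comm (_ ^ (w - 1))]
    _ = hurwitzZetaMulValue z w := by
        rw [hpow, hurwitzZetaMulValue, show 1 - w + (1 - z) = 2 - z - w by ring]
        ring

lemma exists_nonneg_gt_add_lt_one {x y : ℝ} (hx : x < 1) (hy : y < 1) (hxy : x + y < 1) :
    ∃ r r' : ℝ, 0 ≤ r ∧ x < r ∧ 0 ≤ r' ∧ y < r' ∧ r + r' < 1 := by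
  obtain ⟨r, hr, hr_lt⟩ := exists_between (show max x 0 < min 1 (1 - max y 0) by grind)
  obtain ⟨r', hr', hr'_lt⟩ := exists_between (show max y 0 < 1 - r by grind)
  exact ⟨r, r', by grind⟩

lemma differentiableAt_integral_hurwitzZeta_mul {z w : ℂ} (hz : z.re < 1) (hw : w.re < 1)
    (hzw : (z + w).re < 1) :
    DifferentiableAt ℂ (fun z ↦ ∫ q in (0 : ℝ)..1, hurwitzZeta q w * hurwitzZeta q z) z := by
  have ne_one {s : ℂ} (hs : s.re < 1) : s ≠ 1 := by rintro rfl; simp at hs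
  obtain ⟨r, r', hr, hzr, hr', hwr', hrr'⟩ :=
    exists_nonneg_gt_add_lt_one hz hw (by rwa [← add_re])
  obtain ⟨C, hC⟩ := exists_norm_hurwitzZeta_le_rpow (ne_one hz) hr hzr
  obtain ⟨C', hC'⟩ := exists_norm_hurwitzZeta_le_rpow (ne_one hw) hr' hwr'
  have hbound_int : Integrable (fun q : ℝ ↦ C' * C * q ^ (-(r' + r)))
      (volume.restrict (Ioc 0 1)) :=
    ((intervalIntegrable_iff_integrableOn_Ioc_of_le zero_le_one).1
      (intervalIntegral.intervalIntegrable_rpow' (by linarith))).const_mul _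
  simp only [intervalIntegral.integral_of_le zero_le_one]
  refine differentiableAt_integral_of_dominated
    (hC.and (eventually_ne_nhds (ne_one hz))) (fun s _ ↦ ?_) ?_ ?_ hbound_int
  · exact ((continuousOn_hurwitzZeta w).mul (continuousOn_hurwitzZeta s)).aestronglyMeasurable
      measurableSet_Ioc
  · exact .of_forall fun q s hs ↦
      ((differentiableAt_hurwitzZeta q hs.2).const_mul _).differentiableWithinAt
  · filter_upwards [ae_restrict_mem measurableSet_Ioc] with q hq s hs
    calc ‖hurwitzZeta q w * hurwitzZeta q s‖
        ≤ (C' * q ^ (-r')) * (C * q ^ (-r)) := by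
          rw [norm_mul]
          exact mul_le_mul (hC'.self_of_nhds q hq) (hs.1 q hq) (norm_nonneg _)
            ((norm_nonneg _).trans (hC'.self_of_nhds q hq))
      _ = C' * C * q ^ (-(r' + r)) := by
          rw [neg_add, Real.rpow_add hq.1]; ring

lemma integral_hurwitzZeta_mul_hurwitzZeta_of_forall_re_neg {w : ℂ} (hw : w.re < 1)
    (h : ∀ z : ℂ, z.re < 0 → (z + w).re < 1 →
      ∫ q in (0 : ℝ)..1, hurwitzZeta q w * hurwitzZeta q z = hurwitzZetaMulValue z w)
    {z : ℂ} (hz : z.re < 1) (hzw : (z + w).re < 1) :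
    ∫ q in (0 : ℝ)..1, hurwitzZeta q w * hurwitzZeta q z = hurwitzZetaMulValue z w := by
  set U : Set ℂ := {z | z.re < min 1 (1 - w.re)}
  have mem_U {z : ℂ} : z ∈ U ↔ z.re < 1 ∧ (z + w).re < 1 := by
    simp only [U, mem_ofPred_eq, lt_min_iff, add_re, lt_sub_iff_add_lt]
  have hU : IsOpen U := isOpen_lt continuous_re continuous_const
  have hintegral : DifferentiableOn ℂ
      (fun z ↦ ∫ q in (0 : ℝ)..1, hurwitzZeta q w * hurwitzZeta q z) U := fun z hz ↦
    (differentiableAt_integral_hurwitzZeta_mul (mem_U.1 hz).1 hw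
      (mem_U.1 hz).2).differentiableWithinAt
  have hvalue : DifferentiableOn ℂ (hurwitzZetaMulValue · w) U := fun z hz ↦
    (differentiableAt_hurwitzZetaMulValue (mem_U.1 hz).1 (mem_U.1 hz).2).differentiableWithinAt
  have hbase : ((-1 : ℝ) : ℂ) ∈ U := mem_U.2 ⟨by norm_num, by rw [add_re, ofReal_re]; linarith⟩
  refine (hintegral.analyticOnNhd hU).eqOn_of_preconnected_of_eventuallyEq
    (hvalue.analyticOnNhd hU) (convex_halfSpace_re_lt _).isPreconnected hbase ?_
    (mem_U.2 ⟨hz, hzw⟩)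
  filter_upwards [hU.mem_nhds hbase, continuous_re.continuousAt.eventually_lt_const
    (show ((-1 : ℝ) : ℂ).re < 0 by norm_num)] with z hzU hz
  exact h z hz (mem_U.1 hzU).2

theorem integral_hurwitzZeta_mul_hurwitzZeta {z w : ℂ} (hz : z.re < 1) (hw : w.re < 1)
    (hzw : (z + w).re < 1) :
    ∫ q in (0 : ℝ)..1, hurwitzZeta q w * hurwitzZeta q z = hurwitzZetaMulValue z w := by
  have hw_neg {z w : ℂ} (hz : z.re < 1) (hw : w.re < 0) (hzw : (z + w).re < 1) :
      ∫ q in (0 : ℝ)..1, hurwitzZeta q w * hurwitzZeta q z = hurwitzZetaMulValue z w :=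
    integral_hurwitzZeta_mul_hurwitzZeta_of_forall_re_neg (hw.trans one_pos)
      (fun _ hs _ ↦ integral_hurwitzZeta_mul_hurwitzZeta_of_re_neg hs hw) hz hzw
  refine integral_hurwitzZeta_mul_hurwitzZeta_of_forall_re_neg hw (fun s hs hsw ↦ ?_) hz hzw
  simp_rw [mul_comm (hurwitzZeta _ w), hurwitzZetaMulValue_comm s]
  exact hw_neg hw hs (by rwa [add_comm])

lemma eqOn_hurwitzZeta_of_analyticOn {q : ℝ} (hq : q ∈ Ioc (0 : ℝ) 1) {f : ℂ → ℂ}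
    (hf : AnalyticOn ℂ f {1}ᶜ)
    (hfeq : ∀ w : ℂ, 1 < w.re → f w = ∑' n : ℕ, 1 / ((n : ℂ) + (q : ℂ)) ^ w) :
    EqOn f (hurwitzZeta q) {1}ᶜ := by
  have hzeta : AnalyticOnNhd ℂ (hurwitzZeta (q : UnitAddCircle)) {1}ᶜ :=
    DifferentiableOn.analyticOnNhd
      (fun s hs ↦ (differentiableAt_hurwitzZeta _ hs).differentiableWithinAt) isOpen_compl_singleton
  refine (isOpen_compl_singleton.analyticOn_iff_analyticOnNhd.1
    hf).eqOn_of_preconnected_of_eventuallyEq hzeta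
    (isConnected_compl_singleton_of_one_lt_rank (by simp) 1).isPreconnected (z₀ := 2) (by simp) ?_
  filter_upwards [continuous_re.continuousAt.eventually_const_lt
    (show 1 < (2 : ℂ).re by norm_num)] with s hs
  rw [hfeq s hs]
  exact (hasSum_hurwitzZeta_of_one_lt_re ⟨hq.1.le, hq.2⟩ hs).tsum_eq

theorem integral_hurwitzZeta_mul_general (F : ℂ → ℝ → ℂ)
    (hF : ∀ q : ℝ, 0 < q → AnalyticOn ℂ (fun z ↦ F z q) {(1 : ℂ)}ᶜ)
    (hFeq : ∀ w : ℂ, 1 < w.re → ∀ q : ℝ, 0 < q →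
      F w q = ∑' n : ℕ, 1 / ((n : ℂ) + (q : ℂ)) ^ w)
    (z z' : ℂ) (hz : z.re < 1) (hz' : z'.re < 1) (hzz' : (z + z').re < 1) :
    ∫ q in (0 : ℝ)..1, F z' q * F z q =
      2 * Complex.Gamma (1 - z) * Complex.Gamma (1 - z') / (2 * π) ^ (2 - z - z') *
        riemannZeta (2 - z - z') * Complex.cos (π * (z - z') / 2) := by
  have hF_eq {s : ℂ} (hs : s.re < 1) {q : ℝ} (hq : q ∈ Ioc (0 : ℝ) 1) :
      F s q = hurwitzZeta q s :=
    eqOn_hurwitzZeta_of_analyticOn hq (hF q hq.1) (fun w hw ↦ hFeq w hw q hq.1)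
      fun hs_one : s = 1 ↦ by simp [hs_one] at hs
  calc ∫ q in (0 : ℝ)..1, F z' q * F z q
      = ∫ q in (0 : ℝ)..1, hurwitzZeta q z' * hurwitzZeta q z := by
        refine intervalIntegral.integral_congr_ae (.of_forall fun q hq ↦ ?_)
        rw [uIoc_of_le zero_le_one] at hq
        rw [hF_eq hz' hq, hF_eq hz hq]
    _ = hurwitzZetaMulValue z z' := integral_hurwitzZeta_mul_hurwitzZeta hz hz' hzz'

/-- Let `F z q` be (any) analytic continuation in `z` of the Hurwitz zeta function
`ζ(z,q)` for each fixed `q > 0`.  For real `z, z' ≤ 0`,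
`∫₀¹ ζ(z',q) ζ(z,q) dq = (2 Γ(1-z) Γ(1-z') / (2π)^{2-z-z'}) ζ(2-z-z') cos(π(z-z')/2)`. -/
theorem integral_hurwitzZeta_mul (F : ℂ → ℝ → ℂ)
    (hF : ∀ q : ℝ, 0 < q → AnalyticOn ℂ (fun z => F z q) {(1 : ℂ)}ᶜ)
    (hFeq : ∀ w : ℂ, 1 < w.re → ∀ q : ℝ, 0 < q →
      F w q = ∑' n : ℕ, 1 / ((n : ℂ) + (q : ℂ)) ^ w)
    (z z' : ℝ) (hz : z ≤ 0) (hz' : z' ≤ 0) :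
    ∫ q in (0 : ℝ)..1, F (z' : ℂ) q * F (z : ℂ) q =
      2 * Complex.Gamma (1 - (z : ℂ)) * Complex.Gamma (1 - (z' : ℂ)) /
          ((2 * π : ℝ) : ℂ) ^ ((2 - z - z' : ℝ) : ℂ) *
        riemannZeta ((2 - z - z' : ℝ) : ℂ) *
        (Real.cos (π * (z - z') / 2) : ℂ) := by
  exact_mod_cast integral_hurwitzZeta_mul_general F hF hFeq z z' (by rw [ofReal_re]; linarith)
    (by rw [ofReal_re]; linarith) (by rw [add_re, ofReal_re, ofReal_re]; linarith)
end
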